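/- In a planar triangulation, a separating triangle can share at most one of its edges with separating triangles that contain it, where triangle A contains triangle B if the interior of B is a proper subgraph of the interior of A. -/

import Mathlib

/-- A straight-line (plane) embedding of a simple graph: vertices map injectively
to points of the plane, no vertex lies on the interior of an edge, and two
distinct edges intersect only in shared endpoints. -/
def IsPlanarEmbedding {n : ℕ} (G : SimpleGraph (Fin n))
    (p : Fin n → EuclideanSpace ℝ (Fin 2)) : Prop :=
  Function.Injective p ∧
  (∀ u v w : Fin n, G.Adj u v → p w ∈ segment ℝ (p u) (p v) → w = u ∨ w = v) ∧
  (∀ u v x y : Fin n, G.Adj u v → G.Adj x y → ({u, v} : Set (Fin n)) ≠ {x, y} →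
    segment ℝ (p u) (p v) ∩ segment ℝ (p x) (p y) ⊆
      p '' (({u, v} : Set (Fin n)) ∩ {x, y}))

/-- A graph is planar if it admits a straight-line plane embedding (Fáry). -/
def IsPlanar {n : ℕ} (G : SimpleGraph (Fin n)) : Prop :=
  ∃ p : Fin n → EuclideanSpace ℝ (Fin 2), IsPlanarEmbedding G p

/-- A (planar) triangulation is a maximal simple planar graph. -/
def IsTriangulation {n : ℕ} (G : SimpleGraph (Fin n)) : Prop :=
  IsPlanar G ∧ ∀ u v : Fin n, u ≠ v → ¬ G.Adj u v →
    ¬ IsPlanar (G ⊔ SimpleGraph.fromEdgeSet {s(u, v)})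

/-- A separating triangle: three mutually adjacent vertices whose removal
disconnects the graph. -/
def IsSepTriangle {n : ℕ} (G : SimpleGraph (Fin n)) (a b c : Fin n) : Prop :=
  G.Adj a b ∧ G.Adj b c ∧ G.Adj a c ∧
  ¬ (G.induce {v : Fin n | v ∉ ({a, b, c} : Set (Fin n))}).Connected

/-- 4-connectivity: no vertex cutset of size at most 3. -/
def FourConnected {n : ℕ} (G : SimpleGraph (Fin n)) : Prop :=
  ∀ S : Finset (Fin n), S.card ≤ 3 → (G.induce {v : Fin n | v ∉ S}).Connected

/-- Reachability by a walk avoiding the vertex set D. -/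
def AvoidReach {n : ℕ} (G : SimpleGraph (Fin n)) (D : Set (Fin n))
    (u w : Fin n) : Prop :=
  ∃ p : G.Walk u w, ∀ x ∈ p.support, x ∉ D

/-- The interior of a separating triangle {a,b,c}, relative to a designated
outer face outF: the vertices that cannot reach any surviving outer-face
vertex once the triangle is removed. -/
def interiorOf {n : ℕ} (G : SimpleGraph (Fin n)) (outF : Finset (Fin n))
    (a b c : Fin n) : Set (Fin n) :=
  {u | u ∉ ({a, b, c} : Set (Fin n)) ∧
    ¬ ∃ o ∈ outF, (o : Fin n) ∉ ({a, b, c} : Set (Fin n)) ∧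
      AvoidReach G ({a, b, c} : Set (Fin n)) u o}

/-!
In a straight-line drawing of a maximal planar graph, two neighbours of a vertex `b` with no third
neighbour in the angle between them are adjacent. Suppose that the edge `bz` of a triangle `bza`
cuts off a set `C` of vertices attached to both `b` and `z`. Rotating around `b`, one can pass
between `C` and the rest only at `z`; so the neighbours of `b` in `C` and its other neighbours,
except `z`, lie on opposite sides of the line `bz`. The same holds at `z`, and therefore no edge
crosses this line. A shear of one half-plane along the line is then a drawing of the same graph, and
a suitable shear makes the angular order around `b` impossible. Hence every component of the
complement of a triangle is attached to all three corners.

Let the triangle `abc` share `ab` with `X` and `cb` with `Y`, both containing it. By the above `c`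
is inside `X` and `a` is inside `Y`. The third corner of `Y`, a neighbour of `c`, lies on or inside
`X`. From an outer vertex not on `X` one reaches `a` without meeting the inside of `X`, hence
without meeting `Y`, although `a` is inside `Y`.
-/

section Cones

variable {E : Type*} [AddCommGroup E] [Module ℝ E] {o x y w : E}

/-- The open convex cone with apex `o` spanned by the directions of `x` and `y`. -/
def openCone (o x y : E) : Set E :=
  {w | ∃ α β : ℝ, 0 < α ∧ 0 < β ∧ w - o = α • (x - o) + β • (y - o)}

lemma openCone_comm : openCone o x y = openCone o y x := by
  ext w
  constructor <;> rintro ⟨α, β, hα, hβ, h⟩ <;> exact ⟨β, α, hβ, hα, by rw [h, add_comm]⟩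

lemma openCone_subset_openCone (hw : w ∈ openCone o x y) : openCone o x w ⊆ openCone o x y := by
  obtain ⟨α, β, hα, hβ, h⟩ := hw
  rintro v ⟨γ, δ, hγ, hδ, hv⟩
  exact ⟨γ + δ * α, δ * β, by positivity, by positivity, by rw [hv, h]; module⟩

lemma not_collinear_iff_linearIndependent :
    ¬ Collinear ℝ {o, x, y} ↔ LinearIndependent ℝ ![x - o, y - o] := by
  rw [← affineIndependent_iff_not_collinear_set, affineIndependent_iff_linearIndependent_vsub ℝ _ 0,
    ← linearIndependent_equiv (finSuccAboveEquiv (0 : Fin 3))]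
  refine iff_of_eq (congrArg (fun v : Fin 2 → E => LinearIndependent ℝ v) (funext fun i => ?_))
  fin_cases i <;> rfl

lemma not_collinear_iff_forall :
    ¬ Collinear ℝ {o, x, y} ↔
      ∀ s t : ℝ, s • (x - o) + t • (y - o) = 0 → s = 0 ∧ t = 0 := by
  rw [not_collinear_iff_linearIndependent, LinearIndependent.pair_iff]

lemma not_collinear_of_mem_openCone (h : ¬ Collinear ℝ {o, x, y}) (hw : w ∈ openCone o x y) :
    ¬ Collinear ℝ {o, x, w} := by
  obtain ⟨α, β, -, hβ, hw⟩ := hw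
  rw [not_collinear_iff_forall] at h ⊢
  intro s t hst
  obtain ⟨hs, ht⟩ := h (s + t * α) (t * β) (by rw [← hst, hw]; module)
  obtain rfl : t = 0 := (mul_eq_zero.1 ht).resolve_right hβ.ne'
  exact ⟨by simpa using hs, rfl⟩

lemma left_notMem_openCone (h : ¬ Collinear ℝ {o, x, y}) : x ∉ openCone o x y := by
  rintro ⟨α, β, -, hβ, hx⟩
  have := not_collinear_iff_forall.1 h (α - 1) β (by
    linear_combination (norm := module) -hx)
  exact hβ.ne' this.2

lemma right_notMem_openCone (h : ¬ Collinear ℝ {o, x, y}) : y ∉ openCone o x y := by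
  rw [openCone_comm]
  exact left_notMem_openCone (by rwa [Set.pair_comm])

lemma disjoint_segment_openCone (h : ¬ Collinear ℝ {o, x, y}) (hw : w ∈ segment ℝ x y) :
    Disjoint (segment ℝ x y) (openCone w o y) := by
  have h' : ¬ Collinear ℝ {x, o, y} := by rwa [Set.insert_comm]
  rw [segment_eq_image'] at hw ⊢
  obtain ⟨q, -, rfl⟩ := hw
  refine Set.disjoint_left.2 ?_
  rintro _ ⟨r, -, rfl⟩ ⟨α, β, hα, -, hr⟩
  refine hα.ne' (not_collinear_iff_forall.1 h' α (β * (1 - q) - α * q - (r - q)) ?_).1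
  linear_combination (norm := module) -hr

lemma openSegment_subset_openCone : openSegment ℝ x y ⊆ openCone o x y := by
  rintro _ ⟨α, β, hα, hβ, h, rfl⟩
  exact ⟨α, β, hα, hβ, by linear_combination (norm := module) h • o⟩

lemma mem_openCone_self : x ∈ openCone o x x :=
  ⟨1 / 2, 1 / 2, by norm_num, by norm_num, by module⟩

lemma add_mem_openCone_of_smul {e : E} {t : ℝ} (ht : 0 < t) (h : o + t • e ∈ openCone o x y) :
    o + e ∈ openCone o x y := by
  obtain ⟨α, β, hα, hβ, h⟩ := h
  refine ⟨t⁻¹ * α, t⁻¹ * β, by positivity, by positivity, ?_⟩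
  rw [mul_smul, mul_smul, ← smul_add, ← h, add_sub_cancel_left, add_sub_cancel_left,
    inv_smul_smul₀ ht.ne']

lemma disjoint_segment_openCone_apex (h : ¬ Collinear ℝ {o, x, y}) (hw : w ∉ openCone o x y) :
    Disjoint (segment ℝ o w) (openCone o x y) := by
  rw [segment_eq_image']
  refine Set.disjoint_left.2 ?_
  rintro _ ⟨r, ⟨hr, -⟩, rfl⟩ hmem
  rcases hr.eq_or_lt with rfl | hr
  · obtain ⟨α, β, hα, -, h'⟩ := hmem
    exact hα.ne' (not_collinear_iff_forall.1 h α β (by simpa using h'.symm)).1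
  · exact hw (by simpa using add_mem_openCone_of_smul hr hmem)

lemma mem_openCone_of_straddle (hw : w ∈ openCone o x y) {x' y' : E} {s t s' t' : ℝ}
    (hs : 0 ≤ s) (ht : 0 < t) (hy' : y' - o = s • (w - o) + t • (y - o))
    (hs' : 0 ≤ s') (ht' : 0 < t') (hx' : x' - o = s' • (w - o) + t' • (x - o)) :
    w ∈ openCone o y' x' := by
  obtain ⟨α, β, hα, hβ, hw⟩ := hw
  have hc : 0 < β * s / t + α * s' / t' + 1 := by positivity
  refine ⟨(β * s / t + α * s' / t' + 1)⁻¹ * (β / t),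
    (β * s / t + α * s' / t' + 1)⁻¹ * (α / t'), by positivity, by positivity, ?_⟩
  rw [mul_smul, mul_smul, ← smul_add, eq_inv_smul_iff₀ hc.ne']
  calc (β * s / t + α * s' / t' + 1) • (w - o)
      = (β * s / t + α * s' / t') • (w - o) + (α • (x - o) + β • (y - o)) := by rw [← hw]; module
    _ = (β / t) • (y' - o) + (α / t') • (x' - o) := by
      rw [hx', hy']
      match_scalars <;> field_simp
      ring

end Cones

section Coordinates

variable {E : Type*} [AddCommGroup E] [Module ℝ E] {o x y : E}

lemma exists_affine_coords (hE : Module.finrank ℝ E = 2) (h : ¬ Collinear ℝ {o, x, y}) :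
    ∃ S T : E →ᵃ[ℝ] ℝ,
      ∀ w s t, w - o = s • (x - o) + t • (y - o) ↔ S w = s ∧ T w = t := by
  let B := basisOfLinearIndependentOfCardEqFinrank (not_collinear_iff_linearIndependent.1 h)
    (by rw [Fintype.card_fin, hE])
  have hB : ⇑B = ![x - o, y - o] := coe_basisOfLinearIndependentOfCardEqFinrank _ _
  have hsum : ∀ v, v = B.coord 0 v • (x - o) + B.coord 1 v • (y - o) := fun v => by
    simpa [hB] using (B.sum_repr v).symm
  refine ⟨(B.coord 0).toAffineMap.comp (AffineMap.id ℝ E - AffineMap.const ℝ E o),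
    (B.coord 1).toAffineMap.comp (AffineMap.id ℝ E - AffineMap.const ℝ E o), fun w s t => ?_⟩
  have hx : B.repr (x - o) = Finsupp.single 0 1 := by rw [← B.repr_self]; simp [hB]
  have hy : B.repr (y - o) = Finsupp.single 1 1 := by rw [← B.repr_self]; simp [hB]
  constructor
  · intro hw
    simp [hw, hx, hy]
  · rintro ⟨rfl, rfl⟩
    exact hsum (w - o)

lemma apply_lineMap_eq (f : E →ᵃ[ℝ] ℝ) (x y : E) (r : ℝ) :
    f (AffineMap.lineMap x y r) = (1 - r) * f x + r * f y := by
  rw [AffineMap.apply_lineMap, AffineMap.lineMap_apply_ring]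

lemma apply_lineMap_eq_mul {f : E →ᵃ[ℝ] ℝ} (hx : f x = 0) (y : E) (r : ℝ) :
    f (AffineMap.lineMap x y r) = r * f y := by
  rw [apply_lineMap_eq, hx, mul_zero, zero_add]

lemma exists_mem_segment_eq_zero (f : E →ᵃ[ℝ] ℝ) (hx : f x < 0) (hy : 0 < f y) :
    ∃ m ∈ segment ℝ x y, f m = 0 := by
  have : (0 : ℝ) ∈ segment ℝ (f x) (f y) := by
    rw [segment_eq_Icc (hx.trans hy).le]
    exact ⟨hx.le, hy.le⟩
  rwa [← image_segment] at this

lemma exists_lineMap_first_zero (f g : E →ᵃ[ℝ] ℝ) (hf : 0 < f x) (hg : 0 < g x)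
    (hy : f y ≤ 0 ∨ g y ≤ 0) :
    ∃ r : ℝ, 0 < r ∧ r ≤ 1 ∧ 0 ≤ f (AffineMap.lineMap x y r) ∧ 0 ≤ g (AffineMap.lineMap x y r) ∧
      (f (AffineMap.lineMap x y r) = 0 ∨ g (AffineMap.lineMap x y r) = 0) := by
  have hcont : Continuous fun r : ℝ =>
      min (f (AffineMap.lineMap x y r)) (g (AffineMap.lineMap x y r)) := by
    simp only [apply_lineMap_eq]
    fun_prop
  obtain ⟨r, ⟨hr, hr'⟩, hzero⟩ := intermediate_value_Icc' zero_le_one hcont.continuousOn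
    (show (0 : ℝ) ∈ _ by simpa using ⟨hy, hf.le, hg.le⟩)
  have hr0 : r ≠ 0 := by
    rintro rfl
    exact (lt_min hf hg).ne' (by simpa using hzero)
  refine ⟨r, lt_of_le_of_ne hr hr0.symm, hr', ?_⟩
  grind

end Coordinates

section Embeddings

variable {n : ℕ} {G : SimpleGraph (Fin n)} {p : Fin n → EuclideanSpace ℝ (Fin 2)}

lemma isPlanarEmbedding_iff : IsPlanarEmbedding G p ↔ Function.Injective p ∧
    (∀ u v w, G.Adj u v → p w ∈ segment ℝ (p u) (p v) → w = u ∨ w = v) ∧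
    ∀ a b c d m, G.Adj a b → G.Adj c d → s(a, b) ≠ s(c, d) → m ∈ segment ℝ (p a) (p b) →
      m ∈ segment ℝ (p c) (p d) → ∃ k, p k = m ∧ (k = a ∨ k = b) ∧ (k = c ∨ k = d) := by
  have hs : ∀ a b c d : Fin n, s(a, b) ≠ s(c, d) ↔ ({a, b} : Set (Fin n)) ≠ {c, d} := fun a b c d =>
    not_congr (by rw [Set.pair_eq_pair_iff, Sym2.eq_iff])
  refine and_congr_right' <| and_congr_right' ⟨fun h a b c d m hab hcd hne hm hm' => ?_,
    fun h a b c d hab hcd hne m ⟨hm, hm'⟩ => ?_⟩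
  · obtain ⟨k, ⟨hk, hk'⟩, rfl⟩ := h a b c d hab hcd ((hs _ _ _ _).1 hne) ⟨hm, hm'⟩
    exact ⟨k, rfl, hk, hk'⟩
  · obtain ⟨k, rfl, hk, hk'⟩ := h a b c d m hab hcd ((hs _ _ _ _).2 hne) hm hm'
    exact ⟨k, ⟨hk, hk'⟩, rfl⟩

lemma IsPlanarEmbedding.exists_common_end (hp : IsPlanarEmbedding G p) {a b c d : Fin n}
    (hab : G.Adj a b) (hcd : G.Adj c d) (hne : s(a, b) ≠ s(c, d)) {m : EuclideanSpace ℝ (Fin 2)}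
    (hm : m ∈ segment ℝ (p a) (p b)) (hm' : m ∈ segment ℝ (p c) (p d)) :
    ∃ k, p k = m ∧ (k = a ∨ k = b) ∧ (k = c ∨ k = d) :=
  (isPlanarEmbedding_iff.1 hp).2.2 a b c d m hab hcd hne hm hm'

lemma IsPlanarEmbedding.not_collinear (hp : IsPlanarEmbedding G p) {a b c : Fin n}
    (hab : G.Adj a b) (hbc : G.Adj b c) (hac : G.Adj a c) : ¬ Collinear ℝ {p a, p b, p c} := by
  intro h
  rcases h.wbtw_or_wbtw_or_wbtw with h | h | h <;> rw [← mem_segment_iff_wbtw] at h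
  · rcases hp.2.1 a c b hac h with rfl | rfl
    exacts [hab.ne rfl, hbc.ne rfl]
  · rcases hp.2.1 b a c hab.symm h with rfl | rfl
    exacts [hbc.ne rfl, hac.ne rfl]
  · rcases hp.2.1 c b a hbc.symm h with rfl | rfl
    exacts [hac.ne rfl, hab.ne rfl]

lemma IsPlanarEmbedding.eq_of_smul_eq_smul (hp : IsPlanarEmbedding G p) {b x y : Fin n}
    (hx : G.Adj b x) (hy : G.Adj b y) {α β : ℝ} (hα : 0 < α) (hβ : 0 < β)
    (h : α • (p x - p b) = β • (p y - p b)) : x = y := by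
  have hxy : p x = p b + (β / α) • (p y - p b) := by
    rw [div_eq_inv_mul, mul_smul, ← h, inv_smul_smul₀ hα.ne', add_sub_cancel]
  have hyx : p y = p b + (α / β) • (p x - p b) := by
    rw [div_eq_inv_mul, mul_smul, h, inv_smul_smul₀ hβ.ne', add_sub_cancel]
  rcases le_total β α with hle | hle
  · refine (hp.2.1 b y x hy ?_).resolve_left hx.ne'
    rw [segment_eq_image']
    exact ⟨β / α, ⟨by positivity, (div_le_one hα).2 hle⟩, hxy.symm⟩
  · refine ((hp.2.1 b x y hx ?_).resolve_left hy.ne').symm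
    rw [segment_eq_image']
    exact ⟨α / β, ⟨by positivity, (div_le_one hβ).2 hle⟩, hyx.symm⟩

lemma IsTriangulation.adj_of_disjoint (hG : IsTriangulation G) (hp : IsPlanarEmbedding G p)
    {u v : Fin n} (hne : u ≠ v) (hvert : ∀ w, p w ∉ openSegment ℝ (p u) (p v))
    (hedge : ∀ c d, G.Adj c d → Disjoint (segment ℝ (p c) (p d)) (openSegment ℝ (p u) (p v))) :
    G.Adj u v := by
  have hend : ∀ c d m, G.Adj c d → m ∈ segment ℝ (p c) (p d) → m ∈ segment ℝ (p u) (p v) →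
      ∃ k, p k = m ∧ (k = c ∨ k = d) ∧ (k = u ∨ k = v) := by
    intro c d m hcd hm hm'
    rw [← insert_endpoints_openSegment] at hm'
    rcases hm' with rfl | rfl | hm'
    · exact ⟨u, rfl, hp.2.1 c d u hcd hm, .inl rfl⟩
    · exact ⟨v, rfl, hp.2.1 c d v hcd hm, .inr rfl⟩
    · exact (Set.disjoint_left.1 (hedge c d hcd) hm hm').elim
  have hseg : ∀ c d, s(c, d) = s(u, v) → segment ℝ (p c) (p d) = segment ℝ (p u) (p v) := by
    intro c d h
    obtain ⟨rfl, rfl⟩ | ⟨rfl, rfl⟩ := Sym2.eq_iff.1 h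
    exacts [rfl, segment_symm ℝ _ _]
  by_contra hadj
  refine hG.2 u v hne hadj ⟨p, isPlanarEmbedding_iff.2 ⟨hp.1, ?_, ?_⟩⟩
  · rintro c d w (hcd | ⟨hcd, -⟩) hw
    · exact hp.2.1 c d w hcd hw
    · rw [hseg c d hcd, ← insert_endpoints_openSegment] at hw
      have := Sym2.mem_iff (a := w) (b := c) (c := d)
      rw [Set.mem_singleton_iff.1 hcd, Sym2.mem_iff] at this
      exact this.1 (hw.imp (hp.1 ·) fun h => h.elim (hp.1 ·) fun h => (hvert w h).elim)
  · rintro c d c' d' m (hcd | ⟨hcd, -⟩) (hcd' | ⟨hcd', -⟩) hne hm hm'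
    · exact hp.exists_common_end hcd hcd' hne hm hm'
    · obtain ⟨k, hk, hkc, hkv⟩ := hend c d m hcd hm (hseg c' d' hcd' ▸ hm')
      exact ⟨k, hk, hkc, Sym2.mem_iff.1 (hcd' ▸ Sym2.mem_iff.2 hkv)⟩
    · obtain ⟨k, hk, hkc, hkv⟩ := hend c' d' m hcd' hm' (hseg c d hcd ▸ hm)
      exact ⟨k, hk, Sym2.mem_iff.1 (hcd ▸ Sym2.mem_iff.2 hkv), hkc⟩
    · exact (hne (hcd.trans hcd'.symm)).elim

lemma IsTriangulation.adj_of_not_crossing (hG : IsTriangulation G) (hp : IsPlanarEmbedding G p)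
    {u v : Fin n} (hne : u ≠ v) (hvert : ∀ w, p w ∉ openSegment ℝ (p u) (p v))
    (hedge : ∀ c d, G.Adj c d → p c ∉ line[ℝ, p u, p v] →
      Disjoint (segment ℝ (p c) (p d)) (openSegment ℝ (p u) (p v))) :
    G.Adj u v := by
  by_contra hadj
  refine hadj (hG.adj_of_disjoint hp hne hvert fun c d hcd => ?_)
  by_cases hc : p c ∈ line[ℝ, p u, p v]
  swap; · exact hedge c d hcd hc
  by_cases hd : p d ∈ line[ℝ, p u, p v]
  swap; · exact segment_symm ℝ (p d) (p c) ▸ hedge d c hcd.symm hd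
  obtain ⟨r, hr⟩ := mem_affineSpan_pair_iff_exists_lineMap_eq.1 hc
  obtain ⟨s, hs⟩ := mem_affineSpan_pair_iff_exists_lineMap_eq.1 hd
  refine Set.disjoint_left.2 fun m hm hm' => hadj ?_
  have hseg : segment ℝ (p c) (p d) = AffineMap.lineMap (p u) (p v) '' Set.uIcc r s := by
    rw [← segment_eq_uIcc, image_segment, hr, hs]
  rw [openSegment_eq_image_lineMap] at hvert hm'
  obtain ⟨q', hq', rfl⟩ := hm'
  obtain ⟨q, hq, hqq⟩ := hseg ▸ hm
  obtain rfl := AffineMap.lineMap_injective ℝ (hp.1.ne hne) hqq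
  have hr' : r ∉ Set.Ioo 0 1 := fun h => hvert c ⟨r, h, hr⟩
  have hs' : s ∉ Set.Ioo 0 1 := fun h => hvert d ⟨s, h, hs⟩
  have hends : (0 : ℝ) ∈ Set.uIcc r s ∧ (1 : ℝ) ∈ Set.uIcc r s := by
    simp only [Set.mem_uIcc, Set.mem_Ioo] at *
    grind
  have hu := hp.2.1 c d u hcd (hseg ▸ ⟨0, hends.1, AffineMap.lineMap_apply_zero _ _⟩)
  have hv := hp.2.1 c d v hcd (hseg ▸ ⟨1, hends.2, AffineMap.lineMap_apply_one _ _⟩)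
  rcases hu with rfl | rfl <;> rcases hv with rfl | rfl
  exacts [(hne rfl).elim, hcd, hcd.symm, (hne rfl).elim]

variable {b v : Fin n} {ξ : EuclideanSpace ℝ (Fin 2)}

/-- Seen from the vertex `b`, the sides `bξ` and `ξv` of the triangle `bξv` are barriers: an edge
meeting one of them, other than at `b` or at `v`, does not enter the cone at `ξ` spanned by the
triangle. -/
def IsBarrier (G : SimpleGraph (Fin n)) (p : Fin n → EuclideanSpace ℝ (Fin 2)) (b : Fin n)
    (ξ : EuclideanSpace ℝ (Fin 2)) (v : Fin n) : Prop :=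
  ∀ c d, G.Adj c d → ∀ m ∈ segment ℝ (p c) (p d),
    m ∈ segment ℝ (p b) ξ ∧ m ≠ p b ∨ m ∈ segment ℝ ξ (p v) ∧ m ≠ p v →
    Disjoint (segment ℝ (p c) (p d)) (openCone ξ (p b) (p v))

section Barrier

variable {S T : EuclideanSpace ℝ (Fin 2) →ᵃ[ℝ] ℝ}
  (hST : ∀ w s t, w - p b = s • (ξ - p b) + t • (p v - p b) ↔ S w = s ∧ T w = t)

include hST

lemma IsBarrier.notMem_of_coords (hbar : IsBarrier G p b ξ v) {c d : Fin n} (hcd : G.Adj c d)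
    {m m' : EuclideanSpace ℝ (Fin 2)} (hm : m ∈ segment ℝ (p c) (p d)) (hS : 0 < S m)
    (hT : 0 ≤ T m) (hST1 : S m + T m ≤ 1) (hside : T m = 0 ∨ S m + T m = 1)
    (hT' : 0 < T m') (hST' : S m' + T m' < 1) : m' ∉ segment ℝ (p c) (p d) := by
  have hcoord : ∀ w, w - p b = S w • (ξ - p b) + T w • (p v - p b) := fun w =>
    (hST w _ _).2 ⟨rfl, rfl⟩
  have hb : S (p b) = 0 := ((hST (p b) 0 0).1 (by simp)).1
  have hv : S (p v) = 0 := ((hST (p v) 0 1).1 (by simp)).1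
  refine fun hm' => Set.disjoint_left.1 (hbar c d hcd m hm ?_) hm'
    ⟨1 - (S m' + T m'), T m', by linarith, hT', ?_⟩
  · simp only [segment_eq_image']
    refine hside.imp (fun h => ⟨⟨S m, ⟨hS.le, by linarith⟩, ?_⟩, ?_⟩)
      (fun h => ⟨⟨T m, ⟨hT, by linarith⟩, ?_⟩, ?_⟩)
    · have := hcoord m
      rw [h] at this
      linear_combination (norm := module) -this
    · rintro rfl; exact hS.ne' hb
    · have := hcoord m
      rw [eq_sub_of_add_eq h] at this
      linear_combination (norm := module) -this
    · rintro rfl; exact hS.ne' hv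
  · linear_combination (norm := module) hcoord m'

lemma IsBarrier.add_le_one_of_adj (hbar : IsBarrier G p b ξ v) {k : Fin n} (hk : G.Adj b k)
    (hS : 0 < S (p k)) (hT : 0 < T (p k)) : S (p k) + T (p k) ≤ 1 := by
  have hb := (hST (p b) 0 0).1 (by simp)
  by_contra! hgt
  set σ := S (p k) + T (p k)
  have hσ0 : 0 < σ := by positivity
  have hmem : ∀ r : ℝ, 0 < r → r ≤ 1 / σ →
      AffineMap.lineMap (p b) (p k) r ∈ segment ℝ (p b) (p k) := fun r hr hr' => by
    rw [segment_eq_image_lineMap]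
    exact ⟨r, ⟨hr.le, hr'.trans ((div_le_one hσ0).2 hgt.le)⟩, rfl⟩
  have hsum : ∀ r : ℝ, S (AffineMap.lineMap (p b) (p k) r) + T (AffineMap.lineMap (p b) (p k) r) =
      r * σ := fun r => by
    rw [apply_lineMap_eq_mul hb.1, apply_lineMap_eq_mul hb.2, ← mul_add]
  have hone : 1 / σ * σ = 1 := one_div_mul_cancel hσ0.ne'
  refine hbar.notMem_of_coords hST hk (hmem (1 / σ) (by positivity) le_rfl)
    (m' := AffineMap.lineMap (p b) (p k) (1 / (2 * σ))) ?_ ?_ ((hsum _).trans hone).le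
    (.inr ((hsum _).trans hone)) ?_ ?_ (hmem _ (by positivity) ?_)
  · rw [apply_lineMap_eq_mul hb.1]; positivity
  · rw [apply_lineMap_eq_mul hb.2]; positivity
  · rw [apply_lineMap_eq_mul hb.2]; positivity
  · rw [hsum]; field_simp; norm_num
  · gcongr; linarith

lemma IsBarrier.disjoint_openSegment_of_lt (hbar : IsBarrier G p b ξ v) {w : Fin n}
    (hS : 0 ≤ S (p w)) (hT : 0 < T (p w)) (hST1 : S (p w) + T (p w) ≤ 1)
    (hmax : ∀ k, 0 < S (p k) → 0 < T (p k) → S (p k) + T (p k) ≤ 1 →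
      S (p k) * T (p w) ≤ S (p w) * T (p k)) {c d : Fin n} (hcd : G.Adj c d)
    (hc : S (p w) * T (p c) < S (p c) * T (p w)) :
    Disjoint (segment ℝ (p c) (p d)) (openSegment ℝ (p b) (p w)) := by
  refine Set.disjoint_left.2 fun m hm hm' => ?_
  have hb := (hST (p b) 0 0).1 (by simp)
  obtain ⟨q, ⟨hq, hq'⟩, rfl⟩ := openSegment_eq_image_lineMap ℝ (p b) (p w) ▸ hm'
  set m := AffineMap.lineMap (p b) (p w) q
  have hSm : S m = q * S (p w) := apply_lineMap_eq_mul hb.1 _ _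
  have hTm : T m = q * T (p w) := apply_lineMap_eq_mul hb.2 _ _
  have hTm0 : 0 < T m := hTm ▸ mul_pos hq hT
  have hUm0 : S m + T m < 1 := by
    rw [hSm, hTm, ← mul_add]
    exact mul_lt_one_of_nonneg_of_lt_one_left hq.le hq' hST1
  have hexit : T (p c) ≤ 0 ∨ 1 - S (p c) - T (p c) ≤ 0 := by
    by_contra! h
    have : 0 < S (p c) := pos_of_mul_pos_left (hc.trans_le' (mul_nonneg hS h.1.le)) hT.le
    exact (hmax c this h.1 (by linarith)).not_gt hc
  -- Between `m` and `p c` the edge leaves the triangle `bξv`, through one of the barriers.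
  obtain ⟨r, hr, hr1, hTr, hUr, hzero⟩ := exists_lineMap_first_zero T
    (AffineMap.const ℝ _ 1 - S - T) hTm0 (by simpa using by linarith) (by simpa using hexit)
  set m' := AffineMap.lineMap m (p c) r
  have hratio : S (p w) * T m' < S m' * T (p w) := by
    have : S m' * T (p w) - S (p w) * T m' = r * (S (p c) * T (p w) - S (p w) * T (p c)) := by
      simp only [m', apply_lineMap_eq, hSm, hTm]; ring
    linarith [mul_pos hr (sub_pos.2 hc)]
  have hSm'0 : 0 < S m' := pos_of_mul_pos_left (hratio.trans_le' (mul_nonneg hS hTr)) hT.le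
  have hm'seg : m' ∈ segment ℝ (p c) (p d) :=
    (convex_segment _ _).lineMap_mem hm (left_mem_segment ℝ _ _) ⟨hr.le, hr1⟩
  refine hbar.notMem_of_coords hST hcd hm'seg hSm'0 hTr (by simpa [sub_sub] using hUr) ?_ hTm0
    hUm0 hm
  refine hzero.imp id fun h => ?_
  simp only [AffineMap.coe_sub, AffineMap.coe_const, Pi.sub_apply, Function.const_apply] at h
  linarith

lemma IsBarrier.disjoint_openSegment (hbar : IsBarrier G p b ξ v) {w : Fin n}
    (hS : 0 ≤ S (p w)) (hT : 0 < T (p w)) (hST1 : S (p w) + T (p w) ≤ 1)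
    (hmax : ∀ k, 0 < S (p k) → 0 < T (p k) → S (p k) + T (p k) ≤ 1 →
      S (p k) * T (p w) ≤ S (p w) * T (p k))
    (hvert : ∀ k, p k ∉ openSegment ℝ (p b) (p w)) {c d : Fin n} (hcd : G.Adj c d)
    (hc : p c ∉ line[ℝ, p b, p w]) :
    Disjoint (segment ℝ (p c) (p d)) (openSegment ℝ (p b) (p w)) := by
  have hb := (hST (p b) 0 0).1 (by simp)
  rcases lt_trichotomy (S (p w) * T (p c)) (S (p c) * T (p w)) with hlt | heq | hgt
  · exact hbar.disjoint_openSegment_of_lt hST hS hT hST1 hmax hcd hlt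
  · refine (hc (mem_affineSpan_pair_iff_exists_lineMap_eq.2 ⟨T (p c) / T (p w), ?_⟩)).elim
    refine sub_left_inj.1 (((hST _ _ _).2 ⟨?_, ?_⟩).trans ((hST (p c) _ _).2 ⟨rfl, rfl⟩).symm)
    · rw [apply_lineMap_eq_mul hb.1, div_mul_eq_mul_div, mul_comm, heq,
        mul_div_cancel_right₀ _ hT.ne']
    · rw [apply_lineMap_eq_mul hb.2, div_mul_cancel₀ _ hT.ne']
  rcases lt_or_ge (S (p w) * T (p d)) (S (p d) * T (p w)) with hlt' | hge'
  · exact segment_symm ℝ (p d) (p c) ▸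
      hbar.disjoint_openSegment_of_lt hST hS hT hST1 hmax hcd.symm hlt'
  refine Set.disjoint_left.2 fun m hm hm' => ?_
  obtain ⟨r, ⟨hr, hr'⟩, rfl⟩ := segment_eq_image_lineMap ℝ (p c) (p d) ▸ hm
  have hr1 : r ≠ 1 := by
    rintro rfl
    exact hvert d (by simpa using hm')
  obtain ⟨q, -, hq⟩ := openSegment_eq_image_lineMap ℝ (p b) (p w) ▸ hm'
  have hSq := congrArg S hq
  have hTq := congrArg T hq
  rw [apply_lineMap_eq_mul hb.1, apply_lineMap_eq] at hSq
  rw [apply_lineMap_eq_mul hb.2, apply_lineMap_eq] at hTq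
  have hzero : (1 - r) * (S (p c) * T (p w) - S (p w) * T (p c)) +
      r * (S (p d) * T (p w) - S (p w) * T (p d)) = 0 := by
    linear_combination S (p w) * hTq - T (p w) * hSq
  linarith [mul_pos (sub_pos.2 (lt_of_le_of_ne hr' hr1)) (sub_pos.2 hgt),
    mul_nonneg hr (sub_nonneg.2 hge')]

end Barrier

-- `S / T` grows as a ray from `b` turns from `bv` towards `bξ`; among the vertices on the extreme
-- ray the one nearest to `b` is chosen.
lemma exists_max_ratio (p : Fin n → EuclideanSpace ℝ (Fin 2))
    {S T : EuclideanSpace ℝ (Fin 2) → ℝ} (hS : 0 ≤ S (p v))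
    (hT : 0 < T (p v)) (hST : S (p v) + T (p v) ≤ 1) :
    ∃ w, 0 ≤ S (p w) ∧ 0 < T (p w) ∧ S (p w) + T (p w) ≤ 1 ∧
      ∀ k, 0 ≤ S (p k) → 0 < T (p k) → S (p k) + T (p k) ≤ 1 →
        S (p k) * T (p w) < S (p w) * T (p k) ∨
          S (p k) * T (p w) = S (p w) * T (p k) ∧ T (p w) ≤ T (p k) := by
  classical
  obtain ⟨w, hw, hmax⟩ := Finset.exists_max_image
    {k | 0 ≤ S (p k) ∧ 0 < T (p k) ∧ S (p k) + T (p k) ≤ 1}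
    (fun k => toLex (S (p k) / T (p k), -T (p k))) ⟨v, by simp [hS, hT, hST]⟩
  simp only [Finset.mem_filter, Finset.mem_univ, true_and, Prod.Lex.toLex_le_toLex,
    neg_le_neg_iff] at hw hmax
  refine ⟨w, hw.1, hw.2.1, hw.2.2, fun k hk hk' hk'' => ?_⟩
  simpa only [div_lt_div_iff₀ hk' hw.2.1, div_eq_div_iff hk'.ne' hw.2.1.ne'] using
    hmax k ⟨hk, hk', hk''⟩

lemma IsTriangulation.exists_adj_of_isBarrier (hG : IsTriangulation G)
    (hp : IsPlanarEmbedding G p) (hξ : ¬ Collinear ℝ {p b, ξ, p v}) (hbar : IsBarrier G p b ξ v) :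
    ∃ w, G.Adj b w ∧ (∃ s t : ℝ, 0 ≤ s ∧ 0 < t ∧ s + t ≤ 1 ∧
      p w - p b = s • (ξ - p b) + t • (p v - p b)) ∧
      ∀ k, G.Adj b k → p k ∉ openCone (p b) ξ (p w) := by
  obtain ⟨S, T, hST⟩ := exists_affine_coords finrank_euclideanSpace_fin hξ
  have hb := (hST (p b) 0 0).1 (by simp)
  have hv := (hST (p v) 0 1).1 (by simp)
  have hcoord : ∀ w, w - p b = S w • (ξ - p b) + T w • (p v - p b) := fun w =>
    (hST w _ _).2 ⟨rfl, rfl⟩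
  obtain ⟨w, hS, hT, hST1, hmax⟩ := exists_max_ratio (v := v) p (S := S) (T := T)
    (by simp [hv]) (by simp [hv]) (by simp [hv])
  have hvert : ∀ k, p k ∉ openSegment ℝ (p b) (p w) := by
    rw [openSegment_eq_image_lineMap]
    rintro k ⟨q, ⟨hq, hq'⟩, hk⟩
    have hSk : S (p k) = q * S (p w) := hk ▸ apply_lineMap_eq_mul hb.1 _ _
    have hTk : T (p k) = q * T (p w) := hk ▸ apply_lineMap_eq_mul hb.2 _ _
    have := hmax k (by rw [hSk]; positivity) (by rw [hTk]; positivity) (by rw [hSk, hTk]; nlinarith)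
    rw [hSk, hTk] at this
    rcases this with h | ⟨-, h⟩ <;> nlinarith
  refine ⟨w, hG.adj_of_not_crossing hp ?_ hvert fun c d hcd hc => ?_,
    ⟨_, _, hS, hT, hST1, hcoord _⟩, ?_⟩
  · rintro rfl
    exact hT.ne' hb.2
  · refine hbar.disjoint_openSegment hST hS hT hST1 (fun k hk hk' hk'' => ?_) hvert hcd hc
    exact (hmax k hk.le hk' hk'').elim le_of_lt fun h => h.1.le
  · rintro k hk ⟨α, β, hα, hβ, hkw⟩
    obtain ⟨hSk, hTk⟩ := (hST (p k) (α + β * S (p w)) (β * T (p w))).1 (by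
      rw [hkw, hcoord (p w)]; module)
    have hTk0 : 0 < T (p k) := by rw [hTk]; positivity
    have hSk0 : 0 < S (p k) := by rw [hSk]; positivity
    have hle := hmax k hSk0.le hTk0 (hbar.add_le_one_of_adj hST hk hSk0 hTk0)
    rw [hSk, hTk] at hle
    rcases hle with h | ⟨h, -⟩ <;> nlinarith [mul_pos hα hT]

lemma IsPlanarEmbedding.isBarrier_of_consecutive (hp : IsPlanarEmbedding G p) {u : Fin n}
    (hbu : G.Adj b u) (huv : G.Adj u v) (hncol : ¬ Collinear ℝ {p b, p u, p v})
    (hcone : ∀ d, G.Adj u d → p d ∉ openCone (p u) (p b) (p v)) : IsBarrier G p b (p u) v := by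
  have hncol' : ¬ Collinear ℝ {p u, p b, p v} := by rwa [Set.insert_comm]
  have hout : ∀ d, G.Adj u d →
      Disjoint (segment ℝ (p u) (p d)) (openCone (p u) (p b) (p v)) := fun d hd =>
    disjoint_segment_openCone_apex hncol' (hcone d hd)
  have hthrough : ∀ c d, G.Adj c d → u = c ∨ u = d →
      Disjoint (segment ℝ (p c) (p d)) (openCone (p u) (p b) (p v)) := by
    rintro c d hcd (rfl | rfl)
    exacts [hout d hcd, segment_symm ℝ (p u) (p c) ▸ hout c hcd.symm]
  rintro c d hcd m hm hside
  by_cases hc : u = c ∨ u = d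
  · exact hthrough c d hcd hc
  rw [not_or] at hc
  have hne : ∀ w, s(c, d) ≠ s(u, w) := by
    intro w h
    rcases Sym2.eq_iff.1 h with ⟨h, -⟩ | ⟨-, h⟩
    exacts [hc.1 h.symm, hc.2 h.symm]
  obtain ⟨k, rfl, hkc, rfl⟩ : ∃ k, p k = m ∧ (k = c ∨ k = d) ∧ k = u := by
    rcases hside with ⟨hm', hmb⟩ | ⟨hm', hmv⟩
    · obtain ⟨k, rfl, hk, hk'⟩ := hp.exists_common_end hcd hbu.symm (hne b) hm
        (segment_symm ℝ (p b) (p u) ▸ hm')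
      exact ⟨k, rfl, hk, hk'.resolve_right (ne_of_apply_ne p hmb)⟩
    · obtain ⟨k, rfl, hk, hk'⟩ := hp.exists_common_end hcd huv (hne v) hm hm'
      exact ⟨k, rfl, hk, hk'.resolve_right (ne_of_apply_ne p hmv)⟩
  exact hthrough c d hcd hkc

lemma IsTriangulation.adj_of_consecutive (hG : IsTriangulation G) (hp : IsPlanarEmbedding G p)
    {x y : Fin n} (hbx : G.Adj b x) (hby : G.Adj b y) (hncol : ¬ Collinear ℝ {p b, p x, p y})
    (hcone : ∀ k, G.Adj b k → p k ∉ openCone (p b) (p x) (p y)) : G.Adj x y := by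
  have hncol' : ¬ Collinear ℝ {p x, p b, p y} := by rwa [Set.insert_comm]
  obtain ⟨w, hxw, ⟨s, t, hs, ht, hst, hw⟩, hwcone⟩ := hG.exists_adj_of_isBarrier hp hncol'
    (hp.isBarrier_of_consecutive hbx.symm hby hncol' hcone)
  by_contra hxy
  have hwb : p w - p b = (1 - s - t) • (p x - p b) + t • (p y - p b) := by
    linear_combination (norm := module) hw
  have hwy : p w ∉ segment ℝ (p b) (p y) := by
    intro h
    rcases hp.2.1 b y w hby h with rfl | rfl
    · exact ht.ne' (not_collinear_iff_forall.1 hncol _ _ (by rw [← hwb, sub_self])).2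
    · exact hxy hxw
  have hst1 : s + t ≠ 1 := by
    intro h
    rw [segment_eq_image'] at hwy
    rw [sub_sub, h, sub_self, zero_smul, zero_add] at hwb
    exact hwy ⟨t, ⟨ht.le, by linarith⟩, by simp [← hwb]⟩
  -- `w` is inside the triangle `bxy`: the barriers `bx`, `xw` give a neighbour of `b` in the cone.
  have hwcone' : p w ∈ openCone (p b) (p x) (p y) :=
    ⟨1 - s - t, t, by linarith [lt_of_le_of_ne hst hst1], ht, hwb⟩
  have hncolw := not_collinear_of_mem_openCone hncol hwcone'
  obtain ⟨k, hbk, ⟨s', t', hs', ht', -, hk⟩, -⟩ := hG.exists_adj_of_isBarrier hp hncolw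
    (hp.isBarrier_of_consecutive hbx hxw hncolw hwcone)
  have : 0 < 1 - s - t := by linarith [lt_of_le_of_ne hst hst1]
  exact hcone k hbk ⟨s' + t' * (1 - s - t), t' * t, by positivity, by positivity, by
    rw [hk, hwb]; module⟩

lemma IsTriangulation.exists_crossing_adj (hG : IsTriangulation G) (hp : IsPlanarEmbedding G p)
    {C : Set (Fin n)} {x y : Fin n} (hx : x ∈ C) (hy : y ∉ C) (hbx : G.Adj b x) (hby : G.Adj b y)
    (hncol : ¬ Collinear ℝ {p b, p x, p y}) :
    ∃ x' ∈ C, ∃ y' ∉ C, G.Adj x' y' ∧ G.Adj b x' ∧ G.Adj b y' ∧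
      (y' = y ∨ p y' ∈ openCone (p b) (p x) (p y)) := by
  by_cases hcone : ∃ k, G.Adj b k ∧ p k ∈ openCone (p b) (p x) (p y)
  swap
  · push Not at hcone
    exact ⟨x, hx, y, hy, hG.adj_of_consecutive hp hbx hby hncol hcone, hbx, hby, .inl rfl⟩
  obtain ⟨k, hbk, hk⟩ := hcone
  have hk' := openCone_comm (o := p b) ▸ hk
  by_cases hkC : k ∈ C
  · have hncol' : ¬ Collinear ℝ {p b, p k, p y} := by
      rw [Set.pair_comm] at hncol ⊢
      exact not_collinear_of_mem_openCone hncol hk'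
    have hsub : openCone (p b) (p k) (p y) ⊆ openCone (p b) (p x) (p y) := by
      rw [openCone_comm, openCone_comm (x := p x)]
      exact openCone_subset_openCone hk'
    obtain ⟨x', hx', y', hy', h, hbx', hby', hy''⟩ :=
      hG.exists_crossing_adj hp hkC hy hbk hby hncol'
    exact ⟨x', hx', y', hy', h, hbx', hby', hy''.imp id (hsub ·)⟩
  · obtain ⟨x', hx', y', hy', h, hbx', hby', hy''⟩ :=
      hG.exists_crossing_adj hp hx hkC hbx hbk (not_collinear_of_mem_openCone hncol hk)
    refine ⟨x', hx', y', hy', h, hbx', hby', .inr ?_⟩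
    rcases hy'' with rfl | hy''
    exacts [hk, openCone_subset_openCone hk hy'']
termination_by {k | p k ∈ openCone (p b) (p x) (p y)}.ncard
decreasing_by
  · exact Set.ncard_lt_ncard ⟨fun _ => (hsub ·), fun h => left_notMem_openCone hncol' (h hk)⟩
  · exact Set.ncard_lt_ncard ⟨fun _ => (openCone_subset_openCone hk ·), fun h =>
      right_notMem_openCone (not_collinear_of_mem_openCone hncol hk) (h hk)⟩

lemma IsTriangulation.exists_combination_of_cut (hG : IsTriangulation G)
    (hp : IsPlanarEmbedding G p) {C : Set (Fin n)} {z : Fin n}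
    (hcut : ∀ u ∈ C, ∀ w ∉ C, G.Adj u w → w = b ∨ w = z) {x y : Fin n} (hx : x ∈ C) (hy : y ∉ C)
    (hyz : y ≠ z) (hbx : G.Adj b x) (hby : G.Adj b y) :
    ∃ α β γ : ℝ, 0 < α ∧ 0 < β ∧ 0 ≤ γ ∧
      α • (p x - p b) + β • (p y - p b) = γ • (p z - p b) := by
  by_cases hncol : Collinear ℝ {p b, p x, p y}
  swap
  · obtain ⟨x', hx', y', hy', h, -, hby', hcone⟩ :=
      hG.exists_crossing_adj hp hx hy hbx hby hncol
    obtain rfl := (hcut x' hx' y' hy' h).resolve_left hby'.ne'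
    obtain ⟨α, β, hα, hβ, heq⟩ := hcone.resolve_left hyz.symm
    exact ⟨α, β, 1, hα, hβ, zero_le_one, by rw [one_smul, heq]⟩
  have hxb : p x - p b ≠ 0 := sub_ne_zero.2 (hp.1.ne hbx.ne')
  have hyb : p y - p b ≠ 0 := sub_ne_zero.2 (hp.1.ne hby.ne')
  obtain ⟨s, hs⟩ : ∃ s : ℝ, s • (p x - p b) = p y - p b := by
    by_contra! h
    rw [← not_not (a := Collinear _ _), not_collinear_iff_linearIndependent,
      LinearIndependent.pair_iff' hxb] at hncol
    exact hncol h
  have hs0 : s ≠ 0 := by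
    rintro rfl
    exact hyb (by rw [← hs, zero_smul])
  rcases lt_or_gt_of_ne hs0 with hneg | hpos
  · exact ⟨-s, 1, 0, neg_pos.2 hneg, one_pos, le_rfl, by rw [← hs]; module⟩
  · obtain rfl := hp.eq_of_smul_eq_smul hbx hby hpos one_pos (by rw [hs, one_smul])
    exact (hy hx).elim

/-- The part of the drawing away from the vertex `b`: all the other vertices, and the edges that do
not end at `b`. -/
def drawingAway (G : SimpleGraph (Fin n)) (p : Fin n → EuclideanSpace ℝ (Fin 2)) (b : Fin n) :
    Set (EuclideanSpace ℝ (Fin 2)) :=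
  {m | ∃ c d, c ≠ b ∧ d ≠ b ∧ (c = d ∨ G.Adj c d) ∧ m ∈ segment ℝ (p c) (p d)}

lemma mem_drawingAway_of_adj {c d : Fin n} (hc : c ≠ b) (hd : d ≠ b) (hcd : G.Adj c d)
    {m : EuclideanSpace ℝ (Fin 2)} (hm : m ∈ segment ℝ (p c) (p d)) : m ∈ drawingAway G p b :=
  ⟨c, d, hc, hd, .inr hcd, hm⟩

lemma vertex_mem_drawingAway {k : Fin n} (hk : k ≠ b) : p k ∈ drawingAway G p b :=
  ⟨k, k, hk, hk, .inl rfl, left_mem_segment ℝ _ _⟩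

lemma isClosed_drawingAway : IsClosed (drawingAway G p b) := by
  have hclosed : ∀ c d, IsClosed (segment ℝ (p c) (p d)) := fun c d => by
    rw [segment_eq_image_lineMap]
    exact (isCompact_Icc.image AffineMap.lineMap_continuous).isClosed
  have hunion : drawingAway G p b =
      ⋃ e ∈ {e : Fin n × Fin n | e.1 ≠ b ∧ e.2 ≠ b ∧ (e.1 = e.2 ∨ G.Adj e.1 e.2)},
        segment ℝ (p e.1) (p e.2) := by
    ext m
    simp [drawingAway, and_assoc]
  rw [hunion]
  exact (Set.toFinite _).isClosed_biUnion fun e _ => hclosed e.1 e.2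

lemma IsPlanarEmbedding.notMem_drawingAway (hp : IsPlanarEmbedding G p) :
    p b ∉ drawingAway G p b := by
  rintro ⟨c, d, hc, hd, rfl | hcd, hb⟩
  · rw [segment_same] at hb
    exact hc (hp.1 hb).symm
  · rcases hp.2.1 c d b hcd hb with rfl | rfl
    exacts [hc rfl, hd rfl]

lemma IsPlanarEmbedding.exists_first_hit (hp : IsPlanarEmbedding G p)
    {e : EuclideanSpace ℝ (Fin 2)} {t₀ : ℝ} (ht₀ : 0 ≤ t₀)
    (hhit : p b + t₀ • e ∈ drawingAway G p b) :
    ∃ t, 0 < t ∧ p b + t • e ∈ drawingAway G p b ∧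
      ∀ t' : ℝ, 0 ≤ t' → p b + t' • e ∈ drawingAway G p b → t ≤ t' := by
  have hcont : Continuous fun t : ℝ => p b + t • e := by fun_prop
  have hbdd : BddBelow (Set.Ici 0 ∩ (fun t : ℝ => p b + t • e) ⁻¹' drawingAway G p b) :=
    ⟨0, fun _ h => h.1⟩
  obtain ⟨ht, hmem⟩ := (isClosed_Ici.inter (isClosed_drawingAway.preimage hcont)).csInf_mem
    ⟨t₀, ht₀, hhit⟩ hbdd
  refine ⟨_, lt_of_le_of_ne ht fun h => hp.notMem_drawingAway (b := b) ?_, hmem,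
    fun t' ht' hmem' => csInf_le hbdd ⟨ht', hmem'⟩⟩
  simpa only [← h, Set.mem_preimage, zero_smul, add_zero] using hmem

section FirstHit

variable {t : ℝ} {e : EuclideanSpace ℝ (Fin 2)}
  (hfirst : ∀ t' : ℝ, 0 ≤ t' → p b + t' • e ∈ drawingAway G p b → t ≤ t')

include hfirst

lemma eq_of_mem_segment_of_first_hit (ht : 0 < t) {m : EuclideanSpace ℝ (Fin 2)}
    (hm : m ∈ segment ℝ (p b) (p b + t • e)) (hmD : m ∈ drawingAway G p b) :
    m = p b + t • e := by
  rw [segment_eq_image'] at hm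
  obtain ⟨r, ⟨hr, hr1⟩, rfl⟩ := hm
  have hle := hfirst (r * t) (by positivity) (by simpa [mul_smul] using hmD)
  obtain rfl : r = 1 := by nlinarith
  simp

lemma IsTriangulation.adj_of_first_hit (hG : IsTriangulation G) (hp : IsPlanarEmbedding G p)
    (ht : 0 < t) {k : Fin n} (hkb : k ≠ b) (hk : p k = p b + t • e) : G.Adj b k := by
  have hopen : ∀ m ∈ openSegment ℝ (p b) (p k), m ∉ drawingAway G p b := by
    intro m hm hmD
    obtain rfl := (eq_of_mem_segment_of_first_hit hfirst ht
      (hk ▸ openSegment_subset_segment ℝ _ _ hm) hmD).trans hk.symm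
    exact hkb (hp.1 (right_mem_openSegment_iff.1 hm)).symm
  refine hG.adj_of_not_crossing hp hkb.symm (fun j hj => hopen _ hj (vertex_mem_drawingAway ?_))
    fun c d hcd hc => Set.disjoint_left.2 fun m hm hm' => hopen m hm' ?_
  · rintro rfl
    exact hkb (hp.1 (left_mem_openSegment_iff.1 hj)).symm
  refine mem_drawingAway_of_adj ?_ ?_ hcd hm
  · rintro rfl
    exact hc (left_mem_affineSpan_pair ℝ _ _)
  · rintro rfl
    have hmd : m ≠ p d := by
      rintro rfl
      exact hkb (hp.1 (left_mem_openSegment_iff.1 hm')).symm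
    refine hc ?_
    rw [openSegment_eq_image_lineMap] at hm'
    obtain ⟨q, -, hq⟩ := hm'
    rw [segment_symm, segment_eq_image_lineMap] at hm
    obtain ⟨r, -, rfl⟩ := hm
    have hr : r ≠ 0 := by
      rintro rfl
      simp at hmd
    refine mem_affineSpan_pair_iff_exists_lineMap_eq.2 ⟨r⁻¹ * q, ?_⟩
    rw [← AffineMap.lineMap_lineMap_right, hq, AffineMap.lineMap_lineMap_right, inv_mul_cancel₀ hr,
      AffineMap.lineMap_apply_one]

lemma mem_segment_of_first_hit (ht : 0 < t) {c d : Fin n} (hcd : G.Adj c d)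
    {m : EuclideanSpace ℝ (Fin 2)} (hm : m ∈ segment ℝ (p c) (p d))
    (hmξ : m ∈ segment ℝ (p b) (p b + t • e)) (hmb : m ≠ p b) :
    p b + t • e ∈ segment ℝ (p c) (p d) := by
  have hthrough : ∀ d, d ≠ b → m ∈ segment ℝ (p b) (p d) →
      p b + t • e ∈ segment ℝ (p b) (p d) := by
    intro d hd hm
    rw [segment_eq_image'] at hm hmξ ⊢
    obtain ⟨r, ⟨hr, -⟩, rfl⟩ := hm
    obtain ⟨q, ⟨hq, hq1⟩, hrq⟩ := hmξ
    simp only [add_sub_cancel_left, add_right_inj] at hrq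
    have hr0 : 0 < r := lt_of_le_of_ne hr (by rintro rfl; simp at hmb)
    have hq0 : 0 < q := lt_of_le_of_ne hq (by rintro rfl; simp [← hrq] at hmb)
    have hd' : p b + (r⁻¹ * (q * t)) • e = p d := by
      rw [mul_smul, mul_smul, hrq, inv_smul_smul₀ hr0.ne', add_sub_cancel]
    have hle := hfirst (r⁻¹ * (q * t)) (by positivity)
      (by rw [hd']; exact vertex_mem_drawingAway hd)
    rw [inv_mul_eq_div, le_div_iff₀ hr0] at hle
    refine ⟨r / q, ⟨by positivity, (div_le_one hq0).2 (by nlinarith)⟩, ?_⟩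
    change p b + (r / q) • (p d - p b) = p b + t • e
    rw [div_eq_inv_mul, mul_smul, ← hrq, inv_smul_smul₀ hq0.ne']
  rcases eq_or_ne c b with rfl | hc
  · exact hthrough d hcd.ne' hm
  rcases eq_or_ne d b with rfl | hd
  · rw [segment_symm] at hm ⊢
    exact hthrough c hc hm
  · exact eq_of_mem_segment_of_first_hit hfirst ht hmξ (mem_drawingAway_of_adj hc hd hcd hm) ▸ hm

lemma IsPlanarEmbedding.isBarrier_of_first_hit (hp : IsPlanarEmbedding G p) (ht : 0 < t)
    (hvert : ∀ k, p k ≠ p b + t • e) {u : Fin n} (huv : G.Adj u v)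
    (hncol : ¬ Collinear ℝ {p b, p u, p v}) (hmem : p b + t • e ∈ segment ℝ (p u) (p v)) :
    IsBarrier G p b (p b + t • e) v := by
  intro c d hcd m hm hside
  by_cases huv' : s(c, d) = s(u, v)
  · have hdisj := disjoint_segment_openCone hncol hmem
    obtain ⟨rfl, rfl⟩ | ⟨rfl, rfl⟩ := Sym2.eq_iff.1 huv'
    exacts [hdisj, segment_symm ℝ (p d) (p c) ▸ hdisj]
  rcases hside with ⟨hm', hmb⟩ | ⟨hm', hmv⟩
  · obtain ⟨k, hk, -⟩ := hp.exists_common_end hcd huv huv'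
      (mem_segment_of_first_hit hfirst ht hcd hm hm' hmb) hmem
    exact (hvert k hk).elim
  · have hmuv := (convex_segment (p u) (p v)).segment_subset hmem (right_mem_segment ℝ _ _) hm'
    obtain ⟨k, rfl, -, rfl | rfl⟩ := hp.exists_common_end hcd huv huv' hm hmuv
    · rw [mem_segment_iff_wbtw] at hm' hmem
      exact (hvert k (hm'.swap_left_iff.1 hmem).symm).elim
    · exact (hmv rfl).elim

lemma IsPlanarEmbedding.not_collinear_of_first_hit (hp : IsPlanarEmbedding G p) (ht : 0 < t)
    (hvert : ∀ k, p k ≠ p b + t • e) {u : Fin n} (hu : u ≠ b) (hv : v ≠ b) (huv : G.Adj u v)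
    (hmem : p b + t • e ∈ segment ℝ (p u) (p v)) : ¬ Collinear ℝ {p b, p u, p v} := by
  have hfar : ∀ k, k ≠ b → ¬ Wbtw ℝ (p b) (p k) (p b + t • e) := fun k hk h =>
    hvert k (eq_of_mem_segment_of_first_hit hfirst ht (mem_segment_iff_wbtw.2 h)
      (vertex_mem_drawingAway hk))
  rw [mem_segment_iff_wbtw] at hmem
  intro h
  rcases h.wbtw_or_wbtw_or_wbtw with h | h | h
  · exact hfar u hu (h.trans_right_left hmem)
  · exact hfar v hv (h.symm.trans_right_left hmem.symm)
  · exact hp.notMem_drawingAway (mem_drawingAway_of_adj hv hu huv.symm (mem_segment_iff_wbtw.2 h))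

end FirstHit

lemma IsTriangulation.exists_adj_mem_openCone_of_mem_drawingAway (hG : IsTriangulation G)
    (hp : IsPlanarEmbedding G p) {e : EuclideanSpace ℝ (Fin 2)} {t₀ : ℝ} (ht₀ : 0 ≤ t₀)
    (hhit : p b + t₀ • e ∈ drawingAway G p b) :
    ∃ w k, G.Adj b w ∧ G.Adj b k ∧ p b + e ∈ openCone (p b) (p w) (p k) := by
  obtain ⟨t, ht, hmem, hfirst⟩ := hp.exists_first_hit ht₀ hhit
  by_cases hvert : ∃ k, p k = p b + t • e
  · obtain ⟨k, hk⟩ := hvert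
    have hkb : k ≠ b := fun h => hp.notMem_drawingAway (h ▸ hk ▸ hmem)
    have hbk := hG.adj_of_first_hit hfirst hp ht hkb hk
    exact ⟨k, k, hbk, hbk, add_mem_openCone_of_smul ht (hk ▸ mem_openCone_self)⟩
  push Not at hvert
  obtain ⟨u, v, hu, hv, rfl | huv, huvm⟩ := hmem
  · exact (hvert u (by simpa [eq_comm] using huvm)).elim
  have hncol := hp.not_collinear_of_first_hit hfirst ht hvert hu hv huv huvm
  have hvum := segment_symm ℝ (p u) (p v) ▸ huvm
  have hncol' : ¬ Collinear ℝ {p b, p v, p u} := by rwa [Set.pair_comm]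
  have hξ : p b + t • e ∈ openCone (p b) (p u) (p v) := openSegment_subset_openCone
    (mem_openSegment_of_ne_left_right (hvert u) (hvert v) huvm)
  have hξv := not_collinear_of_mem_openCone hncol' (openCone_comm (o := p b) ▸ hξ)
  have hξu := not_collinear_of_mem_openCone hncol hξ
  rw [Set.pair_comm] at hξu hξv
  obtain ⟨w, hbw, ⟨s, τ, hs, hτ, -, hw⟩, -⟩ := hG.exists_adj_of_isBarrier hp hξv
    (hp.isBarrier_of_first_hit hfirst ht hvert huv hncol huvm)
  obtain ⟨k, hbk, ⟨s', τ', hs', hτ', -, hk⟩, -⟩ := hG.exists_adj_of_isBarrier hp hξu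
    (hp.isBarrier_of_first_hit hfirst ht hvert huv.symm hncol' hvum)
  exact ⟨w, k, hbw, hbk, add_mem_openCone_of_smul ht
    (mem_openCone_of_straddle hξ hs hτ hw hs' hτ' hk)⟩

lemma map_linear_sub (φ : EuclideanSpace ℝ (Fin 2) →ᵃ[ℝ] ℝ) (x y : EuclideanSpace ℝ (Fin 2)) :
    φ.linear (x - y) = φ x - φ y :=
  φ.linearMap_vsub x y

section Cut

variable {C : Set (Fin n)} {a z : Fin n} {φ : EuclideanSpace ℝ (Fin 2) →ᵃ[ℝ] ℝ}

lemma IsTriangulation.exists_balance_of_cut (hG : IsTriangulation G) (hp : IsPlanarEmbedding G p)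
    (hcut : ∀ u ∈ C, ∀ w ∉ C, G.Adj u w → w = b ∨ w = z) (hφb : φ (p b) = 0) (hφz : φ (p z) = 0)
    {x y : Fin n} (hx : x ∈ C) (hy : y ∉ C) (hyz : y ≠ z) (hbx : G.Adj b x) (hby : G.Adj b y) :
    ∃ α β : ℝ, 0 < α ∧ 0 < β ∧ α * φ (p x) + β * φ (p y) = 0 := by
  obtain ⟨α, β, γ, hα, hβ, -, h⟩ := hG.exists_combination_of_cut hp hcut hx hy hyz hbx hby
  have := congrArg φ.linear h
  simp only [map_add, map_smul, map_linear_sub, hφb, hφz, sub_zero, smul_eq_mul, mul_zero] at this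
  exact ⟨α, β, hα, hβ, this⟩

lemma IsTriangulation.neg_of_cut (hG : IsTriangulation G) (hp : IsPlanarEmbedding G p)
    (hcut : ∀ u ∈ C, ∀ w ∉ C, G.Adj u w → w = b ∨ w = z) (hba : G.Adj b a) (hza : G.Adj z a)
    (ha : a ∉ C) (hφb : φ (p b) = 0) (hφz : φ (p z) = 0) (hφa : 0 < φ (p a))
    {q : Fin n} (hq : q ∈ C) (hbq : G.Adj b q) : φ (p q) < 0 := by
  obtain ⟨α, β, hα, hβ, h⟩ :=
    hG.exists_balance_of_cut hp hcut hφb hφz hq ha hza.ne' hbq hba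
  by_contra! hle
  exact absurd h (by positivity)

lemma IsTriangulation.neg_or_pos_of_cut (hG : IsTriangulation G) (hp : IsPlanarEmbedding G p)
    (hcut : ∀ u ∈ C, ∀ w ∉ C, G.Adj u w → w = b ∨ w = z) (hba : G.Adj b a) (hza : G.Adj z a)
    (ha : a ∉ C) (hφb : φ (p b) = 0) (hφz : φ (p z) = 0) (hφa : 0 < φ (p a))
    {q : Fin n} (hq : q ∈ C) (hbq : G.Adj b q) {k : Fin n} (hbk : G.Adj b k) (hkz : k ≠ z) :
    k ∈ C ∧ φ (p k) < 0 ∨ k ∉ C ∧ 0 < φ (p k) := by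
  have hneg : ∀ {x}, x ∈ C → G.Adj b x → φ (p x) < 0 :=
    hG.neg_of_cut hp hcut hba hza ha hφb hφz hφa
  by_cases hk : k ∈ C
  · exact .inl ⟨hk, hneg hk hbk⟩
  obtain ⟨α, β, hα, hβ, h⟩ := hG.exists_balance_of_cut hp hcut hφb hφz hq hk hkz hbq hbk
  have := hneg hq hbq
  exact .inr ⟨hk, by by_contra! hle; nlinarith⟩

lemma IsTriangulation.opposite_notMem_openCone_of_cut (hG : IsTriangulation G)
    (hp : IsPlanarEmbedding G p) (hcut : ∀ u ∈ C, ∀ w ∉ C, G.Adj u w → w = b ∨ w = z)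
    (hbz : b ≠ z) (hφb : φ (p b) = 0) (hφz : φ (p z) = 0) {x y : Fin n} (hx : x ∈ C) (hy : y ∉ C)
    (hyz : y ≠ z) (hbx : G.Adj b x) (hby : G.Adj b y) (hφx : φ (p x) < 0) :
    p b + (p b - p z) ∉ openCone (p b) (p x) (p y) := by
  rintro ⟨α, β, hα, -, h⟩
  obtain ⟨α', β', γ, hα', hβ', hγ, h'⟩ := hG.exists_combination_of_cut hp hcut hx hy hyz hbx hby
  rw [add_sub_cancel_left] at h
  have hφ := congrArg φ.linear h
  have hφ' := congrArg φ.linear h'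
  simp only [map_add, map_smul, map_linear_sub, hφb, hφz, sub_self, smul_eq_mul, sub_zero,
    mul_zero] at hφ hφ'
  have hprop : α' * β = α * β' :=
    mul_right_cancel₀ hφx.ne (by linear_combination β * hφ' + β' * hφ)
  have : (α * γ + α') • (p z - p b) = 0 := by
    linear_combination (norm := module) -α • h' - α' • h - hprop • (p y - p b)
  exact hbz.symm (hp.1 (sub_eq_zero.1 ((smul_eq_zero.1 this).resolve_left (by positivity))))

lemma IsTriangulation.notMem_drawingAway_of_cut (hG : IsTriangulation G)
    (hp : IsPlanarEmbedding G p) (hcut : ∀ u ∈ C, ∀ w ∉ C, G.Adj u w → w = b ∨ w = z)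
    (hbz : b ≠ z) (hba : G.Adj b a) (hza : G.Adj z a) (ha : a ∉ C) (hφb : φ (p b) = 0)
    (hφz : φ (p z) = 0) (hφa : 0 < φ (p a)) {q : Fin n} (hq : q ∈ C) (hbq : G.Adj b q)
    {t : ℝ} (ht : 0 ≤ t) : p b + t • (p b - p z) ∉ drawingAway G p b := by
  have hzb : p z - p b ≠ 0 := sub_ne_zero.2 (hp.1.ne hbz.symm)
  intro hhit
  obtain ⟨w, k, hbw, hbk, h⟩ := hG.exists_adj_mem_openCone_of_mem_drawingAway hp ht hhit
  have hsign : ∀ {k}, G.Adj b k → k ≠ z → k ∈ C ∧ φ (p k) < 0 ∨ k ∉ C ∧ 0 < φ (p k) :=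
    hG.neg_or_pos_of_cut hp hcut hba hza ha hφb hφz hφa hq hbq
  obtain ⟨α, β, hα, hβ, hcomb⟩ := id h
  have hφ := congrArg φ.linear hcomb
  simp only [add_sub_cancel_left, map_add, map_smul, map_linear_sub, hφb, hφz, sub_self,
    smul_eq_mul, sub_zero] at hφ
  rcases eq_or_ne w z with rfl | hwz
  · rcases eq_or_ne k w with rfl | hkw
    · have : (1 + α + β) • (p k - p b) = 0 := by
        linear_combination (norm := module) -hcomb
      exact hzb ((smul_eq_zero.1 this).resolve_left (by positivity))
    · rcases hsign hbk hkw with ⟨-, hk⟩ | ⟨-, hk⟩ <;> nlinarith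
  rcases eq_or_ne k z with rfl | hkz
  · rcases hsign hbw hwz with ⟨-, hw⟩ | ⟨-, hw⟩ <;> nlinarith
  rcases hsign hbw hwz with ⟨hwC, hw⟩ | ⟨hwC, hw⟩ <;>
    rcases hsign hbk hkz with ⟨hkC, hk⟩ | ⟨hkC, hk⟩
  · nlinarith
  · exact hG.opposite_notMem_openCone_of_cut hp hcut hbz hφb hφz hwC hkC hkz hbw hbk hw h
  · exact hG.opposite_notMem_openCone_of_cut hp hcut hbz hφb hφz hkC hwC hwz hbk hbw hk
      (openCone_comm (o := p b) ▸ h)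
  · nlinarith

lemma IsTriangulation.lineMap_notMem_drawingAway_of_cut (hG : IsTriangulation G)
    (hp : IsPlanarEmbedding G p) (hcut : ∀ u ∈ C, ∀ w ∉ C, G.Adj u w → w = b ∨ w = z)
    (hbz : b ≠ z) (hba : G.Adj b a) (hza : G.Adj z a) (ha : a ∉ C) (hφb : φ (p b) = 0)
    (hφz : φ (p z) = 0) (hφa : 0 < φ (p a)) {q : Fin n} (hq : q ∈ C) (hbq : G.Adj b q)
    {s : ℝ} (hs : s ≤ 0) : AffineMap.lineMap (p b) (p z) s ∉ drawingAway G p b := by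
  have : AffineMap.lineMap (p b) (p z) s = p b + -s • (p b - p z) := by
    rw [AffineMap.lineMap_apply_module']; module
  rw [this]
  exact hG.notMem_drawingAway_of_cut hp hcut hbz hba hza ha hφb hφz hφa hq hbq (neg_nonneg.2 hs)

lemma IsTriangulation.not_crossing_of_cut (hG : IsTriangulation G) (hp : IsPlanarEmbedding G p)
    (hcut : ∀ u ∈ C, ∀ w ∉ C, G.Adj u w → w = b ∨ w = z) (hbz : G.Adj b z) (hba : G.Adj b a)
    (hza : G.Adj z a) (ha : a ∉ C) (hφ : ∀ w, φ w = 0 ↔ w ∈ line[ℝ, p b, p z])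
    (hφa : 0 < φ (p a)) {q r : Fin n} (hq : q ∈ C) (hbq : G.Adj b q) (hr : r ∈ C)
    (hzr : G.Adj z r) {u v : Fin n} (huv : G.Adj u v) (hu : φ (p u) < 0) : φ (p v) ≤ 0 := by
  by_contra! hv
  have hφb : φ (p b) = 0 := (hφ _).2 (left_mem_affineSpan_pair ℝ _ _)
  have hφz : φ (p z) = 0 := (hφ _).2 (right_mem_affineSpan_pair ℝ _ _)
  have hne : ∀ k, φ (p k) = 0 → k ≠ u ∧ k ≠ v := by
    rintro k hk
    constructor <;> rintro rfl
    exacts [hu.ne hk, hv.ne' hk]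
  obtain ⟨m, hm, hφm⟩ := exists_mem_segment_eq_zero φ hu hv
  obtain ⟨s, rfl⟩ := mem_affineSpan_pair_iff_exists_lineMap_eq.1 ((hφ m).1 hφm)
  rcases le_or_gt s 0 with hs | hs
  · exact hG.lineMap_notMem_drawingAway_of_cut hp hcut hbz.ne hba hza ha hφb hφz hφa hq hbq hs
      (mem_drawingAway_of_adj (hne b hφb).1.symm (hne b hφb).2.symm huv hm)
  rcases le_or_gt 1 s with hs1 | hs1
  · rw [← AffineMap.lineMap_apply_one_sub] at hm
    exact hG.lineMap_notMem_drawingAway_of_cut hp (fun u hu w hw h => (hcut u hu w hw h).symm)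
      hbz.ne' hza hba ha hφz hφb hφa hr hzr (sub_nonpos.2 hs1)
      (mem_drawingAway_of_adj (hne z hφz).1.symm (hne z hφz).2.symm huv hm)
  have hmbz : AffineMap.lineMap (p b) (p z) s ∈ segment ℝ (p b) (p z) :=
    segment_eq_image_lineMap ℝ (p b) (p z) ▸ ⟨s, ⟨hs.le, hs1.le⟩, rfl⟩
  obtain ⟨k, hk, hkuv, -⟩ := hp.exists_common_end huv hbz
    (fun h => by
      have := (Sym2.mem_iff (a := b)).1 (h ▸ Sym2.mem_mk_left b z)
      exact this.elim (hne b hφb).1 (hne b hφb).2) hm hmbz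
  exact hkuv.elim (hne k (hk ▸ hφm)).1 (hne k (hk ▸ hφm)).2

end Cut

-- `g` undoes the deformation of the drawing.
lemma IsPlanarEmbedding.redraw (hp : IsPlanarEmbedding G p) {p' : Fin n → EuclideanSpace ℝ (Fin 2)}
    (g : EuclideanSpace ℝ (Fin 2) → EuclideanSpace ℝ (Fin 2)) (hg : ∀ k, g (p' k) = p k)
    (haff : ∀ u v, G.Adj u v → ∃ A : EuclideanSpace ℝ (Fin 2) →ᵃ[ℝ] EuclideanSpace ℝ (Fin 2),
      Function.Injective A ∧ Set.EqOn g A (segment ℝ (p' u) (p' v))) :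
    IsPlanarEmbedding G p' := by
  have hmaps : ∀ u v, G.Adj u v → ∀ m ∈ segment ℝ (p' u) (p' v), g m ∈ segment ℝ (p u) (p v) := by
    intro u v huv m hm
    obtain ⟨A, -, hgA⟩ := haff u v huv
    rw [hgA hm, ← hg u, ← hg v, hgA (left_mem_segment ℝ _ _), hgA (right_mem_segment ℝ _ _),
      ← image_segment]
    exact ⟨m, hm, rfl⟩
  have hend : ∀ u v k, k = u ∨ k = v → p' k ∈ segment ℝ (p' u) (p' v) := by
    rintro u v _ (rfl | rfl)
    exacts [left_mem_segment ℝ _ _, right_mem_segment ℝ _ _]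
  refine isPlanarEmbedding_iff.2 ⟨fun u v h => hp.1 (by rw [← hg u, h, hg]),
    fun u v w huv hw => hp.2.1 u v w huv (hg w ▸ hmaps u v huv _ hw), ?_⟩
  intro u v c d m huv hcd hne hm hm'
  obtain ⟨k, hk, hkuv, hkcd⟩ := hp.exists_common_end huv hcd hne (hmaps u v huv m hm)
    (hmaps c d hcd m hm')
  obtain ⟨A, hA, hgA⟩ := haff u v huv
  refine ⟨k, hA ?_, hkuv, hkcd⟩
  rw [← hgA (hend u v k hkuv), ← hgA hm, hg, hk]

lemma IsPlanarEmbedding.shear (hp : IsPlanarEmbedding G p)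
    (φ : EuclideanSpace ℝ (Fin 2) →ᵃ[ℝ] ℝ) {e : EuclideanSpace ℝ (Fin 2)} (he : φ.linear e = 0)
    (hside : ∀ u v, G.Adj u v → φ (p u) < 0 → φ (p v) ≤ 0) (s : ℝ) :
    IsPlanarEmbedding G fun k => p k + (s * min (φ (p k)) 0) • e := by
  have hφ : ∀ x (c : ℝ), φ (x + c • e) = φ x := by
    intro x c
    have := φ.map_vadd x (c • e)
    rwa [vadd_eq_add, vadd_eq_add, map_smul, he, smul_zero, zero_add, add_comm] at this
  have hhalf : ∀ u v m, m ∈ segment ℝ (p u + (s * min (φ (p u)) 0) • e)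
      (p v + (s * min (φ (p v)) 0) • e) → φ m ∈ segment ℝ (φ (p u)) (φ (p v)) := by
    intro u v m hm
    rw [← hφ (p u), ← hφ (p v), ← image_segment]
    exact ⟨m, hm, rfl⟩
  refine hp.redraw (fun x => x - (s * min (φ x) 0) • e) (fun k => by simp [hφ]) fun u v huv => ?_
  by_cases hpos : 0 ≤ φ (p u) ∧ 0 ≤ φ (p v)
  · refine ⟨AffineMap.id ℝ _, Function.injective_id, fun m hm => ?_⟩
    have : 0 ≤ φ m := (convex_Ici (0 : ℝ)).segment_subset hpos.1 hpos.2 (hhalf u v m hm)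
    simp [min_eq_right this]
  have hneg : φ (p u) ≤ 0 ∧ φ (p v) ≤ 0 := by
    rcases not_and_or.1 hpos with h | h <;> rw [not_le] at h
    exacts [⟨h.le, hside u v huv h⟩, ⟨hside v u huv.symm h, h.le⟩]
  refine ⟨AffineMap.id ℝ _ - (LinearMap.toSpanSingleton ℝ _ e).toAffineMap.comp (s • φ), ?_, ?_⟩
  · intro x y hxy
    have hxy' : x - (s * φ x) • e = y - (s * φ y) • e := by simpa using hxy
    have := congrArg φ hxy'
    rw [sub_eq_add_neg, sub_eq_add_neg, ← neg_smul, ← neg_smul, hφ, hφ] at this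
    rwa [this, sub_left_inj] at hxy'
  · intro m hm
    have : φ m ≤ 0 := (convex_Iic (0 : ℝ)).segment_subset hneg.1 hneg.2 (hhalf u v m hm)
    simp [min_eq_left this]

lemma IsTriangulation.not_adj_of_cut (hG : IsTriangulation G) {C : Set (Fin n)} {a z : Fin n}
    (hcut : ∀ u ∈ C, ∀ w ∉ C, G.Adj u w → w = b ∨ w = z) (hbz : G.Adj b z) (hba : G.Adj b a)
    (hza : G.Adj z a) (ha : a ∉ C) {q r : Fin n} (hq : q ∈ C) (hbq : G.Adj b q) (hr : r ∈ C) :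
    ¬ G.Adj z r := by
  intro hzr
  obtain ⟨p, hp⟩ := hG.1
  have hncol := hp.not_collinear hbz hza hba
  obtain ⟨S, T, hST⟩ := exists_affine_coords finrank_euclideanSpace_fin hncol
  have hSTb := (hST (p b) 0 0).1 (by simp)
  have hSTz := (hST (p z) 1 0).1 (by simp)
  have hSTa := (hST (p a) 0 1).1 (by simp)
  have hT : ∀ w, T w = 0 ↔ w ∈ line[ℝ, p b, p z] := by
    intro w
    rw [mem_affineSpan_pair_iff_exists_lineMap_eq]
    constructor
    · intro hw
      refine ⟨S w, ?_⟩
      rw [AffineMap.lineMap_apply_module', ← eq_sub_iff_add_eq, (hST w _ _).2 ⟨rfl, hw⟩, zero_smul,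
        add_zero]
    · rintro ⟨s, rfl⟩
      rw [apply_lineMap_eq_mul hSTb.2, hSTz.2, mul_zero]
  have hφa : 0 < T (p a) := by rw [hSTa.2]; exact one_pos
  have hφq : T (p q) < 0 := hG.neg_of_cut hp hcut hba hza ha hSTb.2 hSTz.2 hφa hq hbq
  -- The shear gives `q` the coordinate `-1` along `bz`, so that no positive combination of `q` and
  -- `a`, seen from `b`, points towards `z`.
  have hp' := hp.shear T (e := p z - p b) (by rw [map_linear_sub, hSTb.2, hSTz.2, sub_zero])
    (fun u v huv => hG.not_crossing_of_cut hp hcut hbz hba hza ha hT hφa hq hbq hr hzr huv)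
    ((-1 - S (p q)) / T (p q))
  obtain ⟨α, β, γ, hα, -, hγ, h⟩ := hG.exists_combination_of_cut hp' hcut hq ha hza.ne' hbq hba
  have hqb : p q - p b = S (p q) • (p z - p b) + T (p q) • (p a - p b) := (hST _ _ _).2 ⟨rfl, rfl⟩
  simp only [min_eq_left hφq.le, div_mul_cancel₀ _ hφq.ne, hSTb.2, hSTz.2, min_eq_right hφa.le,
    min_self, mul_zero, zero_smul, add_zero] at h
  have := not_collinear_iff_forall.1 hncol (-α - γ) (α * T (p q) + β) (by
    linear_combination (norm := module) h - α • hqb)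
  linarith [this.1]

open scoped Classical in
lemma IsPlanarEmbedding.translate (hp : IsPlanarEmbedding G p) (C : Set (Fin n))
    (hcut : ∀ u ∈ C, ∀ w ∉ C, ¬ G.Adj u w) (ψ : EuclideanSpace ℝ (Fin 2) →ᵃ[ℝ] ℝ)
    {M : ℝ} {e : EuclideanSpace ℝ (Fin 2)} (hout : ∀ k ∉ C, ψ (p k) ≤ M)
    (hin : ∀ k ∈ C, M < ψ (p k + e)) :
    IsPlanarEmbedding G fun k => if k ∈ C then p k + e else p k := by
  refine hp.redraw (fun x => if ψ x ≤ M then x else x - e) (fun k => ?_) fun u v huv => ?_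
  · by_cases hk : k ∈ C
    · simp [hk, (hin k hk).not_ge]
    · simp [hk, hout k hk]
  · by_cases hu : u ∈ C
    · have hv : v ∈ C := by by_contra hv; exact hcut u hu v hv huv
      refine ⟨(AffineEquiv.constVAdd ℝ (EuclideanSpace ℝ (Fin 2)) (-e)).toAffineMap,
        (AffineEquiv.constVAdd ℝ _ (-e)).injective, fun m hm => ?_⟩
      have : m ∈ ψ ⁻¹' Set.Ioi M := ((convex_Ioi M).affine_preimage ψ).segment_subset
        (hin u hu) (hin v hv) (by simpa [hu, hv] using hm)
      simp [not_le.2 (show M < ψ m from this), sub_eq_neg_add]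
    · have hv : v ∉ C := fun hv => hcut v hv u hu huv.symm
      refine ⟨AffineMap.id ℝ _, Function.injective_id, fun m hm => ?_⟩
      have : m ∈ ψ ⁻¹' Set.Iic M := ((convex_Iic M).affine_preimage ψ).segment_subset
        (hout u hu) (hout v hv) (by simpa [hu, hv] using hm)
      simp [show ψ m ≤ M from this]

lemma IsPlanarEmbedding.exists_separated (hp : IsPlanarEmbedding G p) {C : Set (Fin n)}
    (hC : C.Nonempty) (hC' : Cᶜ.Nonempty) (hcut : ∀ u ∈ C, ∀ w ∉ C, ¬ G.Adj u w) :
    ∃ p', IsPlanarEmbedding G p' ∧ ∃ ψ : EuclideanSpace ℝ (Fin 2) →ᵃ[ℝ] ℝ, ∃ l ∈ C, ∃ r ∉ C,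
      ψ (p' r) < ψ (p' l) ∧ (∀ k ∈ C, ψ (p' l) ≤ ψ (p' k)) ∧ ∀ k ∉ C, ψ (p' k) ≤ ψ (p' r) := by
  classical
  let ψ : EuclideanSpace ℝ (Fin 2) →L[ℝ] ℝ := EuclideanSpace.proj 0
  obtain ⟨l, hl, hmin⟩ := Set.exists_min_image C (ψ <| p ·) C.toFinite hC
  obtain ⟨r, hr, hmax⟩ := Set.exists_max_image Cᶜ (ψ <| p ·) Cᶜ.toFinite hC'
  set e : EuclideanSpace ℝ (Fin 2) := EuclideanSpace.single 0 (ψ (p r) + 1 - ψ (p l))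
  have he : ψ e = ψ (p r) + 1 - ψ (p l) := by simp [ψ, e]
  have hin : ∀ k, ψ (p k + e) = ψ (p k) - ψ (p l) + ψ (p r) + 1 := by
    intro k
    rw [map_add, he]
    ring
  refine ⟨_, hp.translate C hcut ψ.toLinearMap.toAffineMap (M := ψ (p r)) (e := e) hmax
    fun k hk => ?_, ψ.toLinearMap.toAffineMap, l, hl, r, hr, ?_, fun k hk => ?_, fun k hk => ?_⟩
  · change ψ (p r) < ψ (p k + e)
    linarith [hin k, hmin k hk]
  · simp [hl, show r ∉ C from hr, he]
  · simpa [hl, hk, hin] using hmin k hk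
  · simpa [hk, show r ∉ C from hr] using hmax k hk

lemma IsTriangulation.exists_adj_of_mem_of_notMem (hG : IsTriangulation G) {C : Set (Fin n)}
    (hC : C.Nonempty) (hC' : Cᶜ.Nonempty) : ∃ u ∈ C, ∃ w ∉ C, G.Adj u w := by
  by_contra! hcut
  obtain ⟨p₀, hp₀⟩ := hG.1
  obtain ⟨p, hp, ψ, l, hl, r, hr, hlt, hin, hout⟩ := hp₀.exists_separated hC hC' hcut
  have hgap : ∀ m ∈ openSegment ℝ (p l) (p r), ψ (p r) < ψ m ∧ ψ m < ψ (p l) := by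
    intro m hm
    rw [← Set.mem_Ioo, ← openSegment_eq_Ioo hlt, ← image_openSegment, openSegment_symm]
    exact ⟨m, hm, rfl⟩
  refine hcut l hl r hr (hG.adj_of_disjoint hp (ne_of_mem_of_not_mem hl hr) (fun k hk => ?_)
    fun c d hcd => Set.disjoint_left.2 fun m hm hm' => ?_)
  · by_cases hkC : k ∈ C
    exacts [(hin k hkC).not_gt (hgap _ hk).2, (hout k hkC).not_gt (hgap _ hk).1]
  by_cases hc : c ∈ C
  · have hd : d ∈ C := by
      by_contra hd
      exact hcut c hc d hd hcd
    exact (hgap m hm').2.not_ge (((convex_Ici _).affine_preimage ψ).segment_subset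
      (hin c hc) (hin d hd) hm)
  · have hd : d ∉ C := fun hd => hcut d hd c hc hcd.symm
    exact (hgap m hm').1.not_ge (((convex_Iic _).affine_preimage ψ).segment_subset
      (hout c hc) (hout d hd) hm)

lemma IsTriangulation.not_adj_of_cut_vertex (hG : IsTriangulation G) {C : Set (Fin n)}
    {a z : Fin n} (hcut : ∀ u ∈ C, ∀ w ∉ C, G.Adj u w → w = b) (hba : G.Adj b a) (hbz : G.Adj b z)
    (haz : a ≠ z) (ha : a ∉ C) (hz : z ∉ C) {q : Fin n} (hq : q ∈ C) : ¬ G.Adj b q := by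
  intro hbq
  obtain ⟨p, hp⟩ := hG.1
  have hopp : ∀ y ∉ C, G.Adj b y →
      ∃ α β : ℝ, 0 < α ∧ 0 < β ∧ α • (p q - p b) + β • (p y - p b) = 0 := by
    intro y hy hby
    obtain ⟨α, β, γ, hα, hβ, -, h⟩ := hG.exists_combination_of_cut hp
      (fun u hu w hw h => .inl (hcut u hu w hw h)) hq hy hby.ne' hbq hby
    exact ⟨α, β, hα, hβ, by rw [h, sub_self, smul_zero]⟩
  obtain ⟨α, β, hα, hβ, h⟩ := hopp a ha hba
  obtain ⟨α', β', hα', hβ', h'⟩ := hopp z hz hbz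
  exact haz (hp.eq_of_smul_eq_smul hba hbz (mul_pos hα' hβ) (mul_pos hα hβ') (by
    linear_combination (norm := module) α' • h - α • h'))

lemma IsTriangulation.exists_adj_of_triangle (hG : IsTriangulation G) {C : Set (Fin n)}
    {a b z : Fin n} (hbz : G.Adj b z) (hba : G.Adj b a) (hza : G.Adj z a) (hC : C.Nonempty)
    (ha : a ∉ C) (hb : b ∉ C) (hz : z ∉ C) : ∃ u ∈ C, ∃ w ∉ C, w ≠ b ∧ w ≠ z ∧ G.Adj u w := by
  by_contra! h
  have hcut : ∀ u ∈ C, ∀ w ∉ C, G.Adj u w → w = b ∨ w = z := fun u hu w hw huw => by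
    by_contra! hne
    exact h u hu w hw hne.1 hne.2 huw
  by_cases hbC : ∃ q ∈ C, G.Adj b q <;> by_cases hzC : ∃ r ∈ C, G.Adj z r
  · obtain ⟨q, hq, hbq⟩ := hbC
    obtain ⟨r, hr, hzr⟩ := hzC
    exact hG.not_adj_of_cut hcut hbz hba hza ha hq hbq hr hzr
  · obtain ⟨q, hq, hbq⟩ := hbC
    refine hG.not_adj_of_cut_vertex (fun u hu w hw huw => ?_) hba hbz hza.ne' ha hz hq hbq
    exact (hcut u hu w hw huw).resolve_right fun hwz => hzC ⟨u, hu, hwz ▸ huw.symm⟩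
  · obtain ⟨r, hr, hzr⟩ := hzC
    refine hG.not_adj_of_cut_vertex (fun u hu w hw huw => ?_) hza hbz.symm hba.ne' ha hb hr hzr
    exact (hcut u hu w hw huw).resolve_left fun hwb => hbC ⟨u, hu, hwb ▸ huw.symm⟩
  · obtain ⟨u, hu, w, hw, huw⟩ := hG.exists_adj_of_mem_of_notMem hC ⟨a, ha⟩
    rcases hcut u hu w hw huw with rfl | rfl
    exacts [hbC ⟨u, hu, huw.symm⟩, hzC ⟨u, hu, huw.symm⟩]

end Embeddings

section SeparatingTriangles

variable {n : ℕ} {G : SimpleGraph (Fin n)} {D D' : Set (Fin n)} {u v w : Fin n}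

namespace AvoidReach

lemma refl (hu : u ∉ D) : AvoidReach G D u u := ⟨.nil, by simpa using hu⟩

lemma symm (h : AvoidReach G D u v) : AvoidReach G D v u := by
  obtain ⟨p, hp⟩ := h
  exact ⟨p.reverse, by simpa using hp⟩

lemma trans (h : AvoidReach G D u v) (h' : AvoidReach G D v w) : AvoidReach G D u w := by
  obtain ⟨p, hp⟩ := h
  obtain ⟨q, hq⟩ := h'
  refine ⟨p.append q, fun x hx => ?_⟩
  rcases (SimpleGraph.Walk.mem_support_append_iff p q).1 hx with hx | hx
  exacts [hp x hx, hq x hx]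

lemma of_adj (h : G.Adj u v) (hu : u ∉ D) (hv : v ∉ D) : AvoidReach G D u v :=
  ⟨h.toWalk, by simp [hu, hv]⟩

lemma right_notMem (h : AvoidReach G D u v) : v ∉ D := by
  obtain ⟨p, hp⟩ := h
  exact hp v p.end_mem_support

lemma of_forall_notMem (h : AvoidReach G D u v) (hD' : ∀ x, AvoidReach G D u x → x ∉ D') :
    AvoidReach G D' u v := by
  classical
  obtain ⟨p, hp⟩ := h
  exact ⟨p, fun x hx => hD' x
    ⟨p.takeUntil x hx, fun y hy => hp y (p.support_takeUntil_subset_support hx hy)⟩⟩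

lemma reachable_induce (h : AvoidReach G D u v) (hu : u ∉ D) (hv : v ∉ D) :
    (G.induce {x | x ∉ D}).Reachable ⟨u, hu⟩ ⟨v, hv⟩ := by
  obtain ⟨p, hp⟩ := h
  exact ⟨p.induce {x | x ∉ D} hp⟩

end AvoidReach

variable {outF : Finset (Fin n)} {a b c x y z : Fin n}

lemma interiorOf_congr (h : ({a, b, c} : Set (Fin n)) = {x, y, z}) :
    interiorOf G outF a b c = interiorOf G outF x y z := by
  simp only [interiorOf, h]

lemma interiorOf_rev : interiorOf G outF c b a = interiorOf G outF a b c :=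
  interiorOf_congr (by rw [Set.pair_comm, Set.insert_comm, Set.pair_comm c b, Set.insert_comm])

lemma notMem_outF_of_mem_interiorOf (hu : u ∈ interiorOf G outF a b c) : u ∉ outF :=
  fun ho => hu.2 ⟨u, ho, hu.1, .refl hu.1⟩

lemma AvoidReach.mem_interiorOf (h : AvoidReach G {a, b, c} u v)
    (hu : u ∈ interiorOf G outF a b c) : v ∈ interiorOf G outF a b c :=
  ⟨h.right_notMem, fun ⟨o, ho, hoD, hr⟩ => hu.2 ⟨o, ho, hoD, h.trans hr⟩⟩

lemma mem_interiorOf_of_adj (hu : u ∈ interiorOf G outF a b c) (h : G.Adj u v)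
    (hv : v ∉ ({a, b, c} : Set (Fin n))) : v ∈ interiorOf G outF a b c :=
  (AvoidReach.of_adj h hu.1 hv).mem_interiorOf hu

lemma AvoidReach.notMem_of_mem_outF (h : AvoidReach G {a, b, z} u v) (hu : u ∈ outF)
    (hc : c ∈ interiorOf G outF a b z) (hw : w = z ∨ w ∈ interiorOf G outF a b z) :
    v ∉ ({c, b, w} : Set (Fin n)) := by
  intro hv
  have hvI : v ∉ interiorOf G outF a b z := fun hvI =>
    notMem_outF_of_mem_interiorOf (h.symm.mem_interiorOf hvI) hu
  have hvX := h.right_notMem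
  rcases hv with rfl | rfl | rfl
  · exact hvI hc
  · simp at hvX
  · exact hw.elim (fun hw => by simp [hw] at hvX) hvI

lemma interiorOf_nonempty_of_not_connected (hface : ∀ u ∈ outF, ∀ v ∈ outF, u ≠ v → G.Adj u v)
    (hcon : ¬ (G.induce {v : Fin n | v ∉ ({a, b, c} : Set (Fin n))}).Connected)
    {t : Fin n} (ht : t ∉ ({a, b, c} : Set (Fin n))) : (interiorOf G outF a b c).Nonempty := by
  by_contra! hempty
  have hreach : ∀ u ∉ ({a, b, c} : Set (Fin n)), ∃ o ∈ outF, o ∉ ({a, b, c} : Set (Fin n)) ∧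
      AvoidReach G {a, b, c} u o := by
    intro u hu
    by_contra hno
    exact Set.eq_empty_iff_forall_notMem.1 hempty u ⟨hu, hno⟩
  have : Nonempty {v : Fin n | v ∉ ({a, b, c} : Set (Fin n))} := ⟨⟨t, ht⟩⟩
  refine hcon ⟨?_⟩
  rintro ⟨u, hu⟩ ⟨v, hv⟩
  obtain ⟨o, ho, hoD, hr⟩ := hreach u hu
  obtain ⟨o', ho', hoD', hr'⟩ := hreach v hv
  have hoo : AvoidReach G {a, b, c} o o' := by
    by_cases h : o = o'
    · exact h ▸ .refl hoD
    · exact .of_adj (hface o ho o' ho' h) hoD hoD'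
  exact ((hr.trans hoo).trans hr'.symm).reachable_induce hu hv

namespace IsTriangulation

lemma exists_avoidReach_adj (hG : IsTriangulation G) (hab : G.Adj a b) (hbc : G.Adj b c)
    (hac : G.Adj a c) {t : Fin n} (ht : t ∉ ({a, b, c} : Set (Fin n))) :
    ∃ u, AvoidReach G {a, b, c} t u ∧ G.Adj u a := by
  obtain ⟨u, hu, w, hw, hwb, hwc, huw⟩ := hG.exists_adj_of_triangle
    (C := {u | AvoidReach G {a, b, c} t u}) hbc hab.symm hac.symm ⟨t, .refl ht⟩
    (fun h => h.right_notMem (by simp)) (fun h => h.right_notMem (by simp))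
    (fun h => h.right_notMem (by simp))
  have hwD : w ∈ ({a, b, c} : Set (Fin n)) := by
    by_contra hwD
    exact hw (AvoidReach.trans hu (.of_adj huw (AvoidReach.right_notMem hu) hwD))
  obtain rfl : w = a := by simpa [hwb, hwc] using hwD
  exact ⟨u, hu, huw⟩

lemma mem_interiorOf_of_shared_edge (hG : IsTriangulation G) (hab : G.Adj a b) (hbc : G.Adj b c)
    (hac : G.Adj a c) (hI : (interiorOf G outF a b c).Nonempty)
    (hsub : interiorOf G outF a b c ⊂ interiorOf G outF a b z) :
    c ∈ interiorOf G outF a b z := by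
  have hcz : c ≠ z := by
    rintro rfl
    exact hsub.ne rfl
  obtain ⟨i, hi⟩ := hI
  have hperm : ({c, a, b} : Set (Fin n)) = {a, b, c} := by
    rw [Set.insert_comm, Set.pair_comm]
  obtain ⟨u, hu, huc⟩ := hG.exists_avoidReach_adj hac.symm hab hbc.symm (hperm ▸ hi.1)
  exact mem_interiorOf_of_adj (hsub.subset ((hperm ▸ hu).mem_interiorOf hi)) huc
    (by simp [hac.ne', hbc.ne', hcz])

lemma not_two_shared_edges (hG : IsTriangulation G) (houtF : 2 < outF.card) (hab : G.Adj a b)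
    (hbc : G.Adj b c) (hac : G.Adj a c) (hI : (interiorOf G outF a b c).Nonempty)
    (haz : G.Adj a z) (hbz : G.Adj b z) (hX : interiorOf G outF a b c ⊂ interiorOf G outF a b z)
    (hcw : G.Adj c w) (hbw : G.Adj b w) :
    ¬ interiorOf G outF a b c ⊂ interiorOf G outF c b w := by
  intro hY
  have hcX := hG.mem_interiorOf_of_shared_edge hab hbc hac hI hX
  rw [← interiorOf_rev] at hI hY
  have haY := hG.mem_interiorOf_of_shared_edge hbc.symm hab.symm hac.symm hI hY
  have hwX : w = z ∨ w ∈ interiorOf G outF a b z := by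
    by_cases hwz : w = z
    · exact .inl hwz
    · have haw : w ≠ a := fun h => haY.1 (by simp [h])
      exact .inr (mem_interiorOf_of_adj hcX hcw (by simp [haw, hbw.ne', hwz]))
  obtain ⟨t, ht, htbz⟩ : ∃ t ∈ outF, t ∉ ({b, z} : Finset (Fin n)) :=
    Finset.exists_mem_notMem_of_card_lt_card (Finset.card_le_two.trans_lt houtF)
  have hta : t ≠ a := by
    rintro rfl
    exact notMem_outF_of_mem_interiorOf haY ht
  have htX : t ∉ ({a, b, z} : Set (Fin n)) := by simp_all
  have hout : ∀ x, AvoidReach G {a, b, z} t x → x ∉ ({c, b, w} : Set (Fin n)) := fun x hx =>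
    hx.notMem_of_mem_outF ht hcX hwX
  obtain ⟨u, hu, hua⟩ := hG.exists_avoidReach_adj hab hbz haz htX
  have hta' : AvoidReach G {c, b, w} t a :=
    (hu.of_forall_notMem hout).trans (.of_adj hua (hout u hu) haY.1)
  exact notMem_outF_of_mem_interiorOf (hta'.symm.mem_interiorOf haY) ht

end IsTriangulation

lemma exists_third_of_mem_edges (hxy : G.Adj x y) (hyz : G.Adj y z) (hxz : G.Adj x z)
    (he : s(a, b) ∈ ({s(x, y), s(y, z), s(x, z)} : Set (Sym2 (Fin n)))) :
    ∃ w, G.Adj a w ∧ G.Adj b w ∧ ({a, b, w} : Set (Fin n)) = {x, y, z} := by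
  simp only [Set.mem_insert_iff, Set.mem_singleton_iff, Sym2.eq_iff] at he
  rcases he with (⟨rfl, rfl⟩ | ⟨rfl, rfl⟩) | (⟨rfl, rfl⟩ | ⟨rfl, rfl⟩) | (⟨rfl, rfl⟩ | ⟨rfl, rfl⟩)
  · exact ⟨z, hxz, hyz, rfl⟩
  · exact ⟨z, hyz, hxz, by grind⟩
  · exact ⟨x, hxy.symm, hxz.symm, by grind⟩
  · exact ⟨x, hxz.symm, hxy.symm, by grind⟩
  · exact ⟨y, hxy, hyz.symm, by grind⟩
  · exact ⟨y, hyz.symm, hxy, by grind⟩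

lemma exists_common_corner (hab : G.Adj a b) (hbc : G.Adj b c) (hac : G.Adj a c)
    {e f : Sym2 (Fin n)} (he : e ∈ ({s(a, b), s(b, c), s(a, c)} : Set (Sym2 (Fin n))))
    (hf : f ∈ ({s(a, b), s(b, c), s(a, c)} : Set (Sym2 (Fin n)))) (hef : e ≠ f) :
    ∃ x y z, G.Adj x y ∧ G.Adj y z ∧ G.Adj x z ∧ ({x, y, z} : Set (Fin n)) = {a, b, c} ∧
      e = s(x, y) ∧ f = s(z, y) := by
  rcases he with rfl | rfl | rfl <;> rcases hf with rfl | rfl | rfl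
  · exact (hef rfl).elim
  · exact ⟨a, b, c, hab, hbc, hac, rfl, rfl, Sym2.eq_swap⟩
  · exact ⟨b, a, c, hab.symm, hac, hbc, by grind, Sym2.eq_swap, Sym2.eq_swap⟩
  · exact ⟨c, b, a, hbc.symm, hab.symm, hac.symm, by grind, Sym2.eq_swap, rfl⟩
  · exact (hef rfl).elim
  · exact ⟨b, c, a, hbc, hac.symm, hab.symm, by grind, rfl, rfl⟩
  · exact ⟨c, a, b, hac.symm, hab, hbc.symm, by grind, Sym2.eq_swap, Sym2.eq_swap⟩
  · exact ⟨a, c, b, hac, hbc.symm, hab, by grind, rfl, rfl⟩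
  · exact (hef rfl).elim

end SeparatingTriangles

theorem sepTriangle_at_most_one_shared_edge_with_containing_general
    (n : ℕ) (G : SimpleGraph (Fin n)) (hG : IsTriangulation G)
    (outF : Finset (Fin n)) (houtF : 2 < outF.card)
    (hface : ∀ u ∈ outF, ∀ v ∈ outF, u ≠ v → G.Adj u v)
    (a b c : Fin n) (hD : IsSepTriangle G a b c) :
    Set.ncard {e : Sym2 (Fin n) |
      e ∈ ({s(a, b), s(b, c), s(a, c)} : Set (Sym2 (Fin n))) ∧
      ∃ x y z : Fin n, (G.Adj x y ∧ G.Adj y z ∧ G.Adj x z) ∧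
        interiorOf G outF a b c ⊂ interiorOf G outF x y z ∧
        e ∈ ({s(x, y), s(y, z), s(x, z)} : Set (Sym2 (Fin n)))} ≤ 1 := by
  obtain ⟨hab, hbc, hac, hcon⟩ := hD
  rw [Set.ncard_le_one (Set.toFinite _)]
  rintro e ⟨he, x, y, z, ⟨hxy, hyz, hxz⟩, hX, heX⟩ f ⟨hf, x', y', z', ⟨hxy', hyz', hxz'⟩, hY, hfY⟩
  by_contra hef
  obtain ⟨a', b', c', hab', hbc', hac', habc, rfl, rfl⟩ :=
    exists_common_corner hab hbc hac he hf hef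
  obtain ⟨v, hav, hbv, habv⟩ := exists_third_of_mem_edges hxy hyz hxz heX
  obtain ⟨w, hcw, hbw, hcbw⟩ := exists_third_of_mem_edges hxy' hyz' hxz' hfY
  rw [← interiorOf_congr habc, ← interiorOf_congr habv] at hX
  rw [← interiorOf_congr habc, ← interiorOf_congr hcbw] at hY
  have hvc : v ≠ c' := by
    rintro rfl
    exact hX.ne rfl
  have hI := interiorOf_nonempty_of_not_connected hface (habc ▸ hcon) (t := v)
    (by simp [hav.ne', hbv.ne', hvc])
  exact hG.not_two_shared_edges houtF hab' hbc' hac' hI hav hbv hX hcw hbw hY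

/-- A separating triangle shares at most one of its edges with separating
triangles that contain it (containment: proper inclusion of interiors). -/
theorem sepTriangle_at_most_one_shared_edge_with_containing
    (n : ℕ) (G : SimpleGraph (Fin n)) (hG : IsTriangulation G)
    (outF : Finset (Fin n)) (houtF : outF.card = 3)
    (hface : ∀ u ∈ outF, ∀ v ∈ outF, u ≠ v → G.Adj u v)
    (a b c : Fin n) (hD : IsSepTriangle G a b c) :
    Set.ncard {e : Sym2 (Fin n) |
      e ∈ ({s(a, b), s(b, c), s(a, c)} : Set (Sym2 (Fin n))) ∧
      ∃ x y z : Fin n, IsSepTriangle G x y z ∧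
        interiorOf G outF a b c ⊂ interiorOf G outF x y z ∧
        e ∈ ({s(x, y), s(y, z), s(x, z)} : Set (Sym2 (Fin n)))} ≤ 1 := by
  refine (Set.ncard_le_ncard ?_ (Set.toFinite _)).trans
    (sepTriangle_at_most_one_shared_edge_with_containing_general n G hG outF (by omega) hface
      a b c hD)
  exact fun e ⟨he, x, y, z, hT, h⟩ => ⟨he, x, y, z, ⟨hT.1, hT.2.1, hT.2.2.1⟩, h⟩
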